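/- There exists C > 0 such that for every τ ∈ (0,1] and every sequence (u_n)_{n∈ℤ} of functions in L^{4/3}(𝕋) with only finitely many nonzero terms, ‖(Π_τ u_n)_{n∈ℤ}‖_{X^{0,-3/8}_τ} ≤ C ‖(u_n)‖_{ℓ^{4/3}_τ L^{4/3}}. -/

import Mathlib

noncomputable section

open MeasureTheory Complex Filter Topology AddCircle
open scoped ENNReal

abbrev Torus := AddCircle (2 * Real.pi)

instance : Fact (0 < 2 * Real.pi) := ⟨by positivity⟩

/-- Japanese bracket `⟨x⟩ = (1+|x|²)^{1/2}`. -/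
def jbr (x : ℝ) : ℝ := Real.sqrt (1 + x ^ 2)

/-- The Sobolev `H^s` norm on the torus, via Fourier coefficients. -/
def hsNorm (s : ℝ) (f : Torus → ℂ) : ℝ :=
  Real.sqrt (∑' k : ℤ, jbr k ^ (2 * s) * ‖fourierCoeff f k‖ ^ 2)

/-- Membership in `H^s(𝕋)` (as a function): square integrable with finite `H^s` norm. -/
def InHs (s : ℝ) (f : Torus → ℂ) : Prop :=
  MemLp f 2 haarAddCircle ∧ Summable fun k : ℤ => jbr k ^ (2 * s) * ‖fourierCoeff f k‖ ^ 2

/-- The frequency cutoff `Π_τ`, keeping the Fourier modes `|k| ≤ τ^{-1/2}`. -/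
def projC (τ : ℝ) (f : Torus → ℂ) : Torus → ℂ := fun x =>
  ∑' k : ℤ, if |(k : ℝ)| ≤ τ ^ (-(1 : ℝ) / 2) then fourierCoeff f k * fourier k x else 0

/-- The free Schrödinger group `e^{it∂_x²}`, given by the Fourier multiplier `e^{-itk²}`. -/
def schrod (t : ℝ) (f : Torus → ℂ) : Torus → ℂ := fun x =>
  ∑' k : ℤ, Complex.exp (-Complex.I * t * (k : ℂ) ^ 2) * fourierCoeff f k * fourier k x

/-- Continuity on `I` with values in `L²(𝕋)`. -/
def ContL2On (I : Set ℝ) (u : ℝ → Torus → ℂ) : Prop :=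
  (∀ t ∈ I, MemLp (u t) 2 haarAddCircle) ∧
  ∀ t ∈ I, Tendsto (fun t' => eLpNorm (u t' - u t) 2 haarAddCircle) (nhdsWithin t I) (nhds 0)

/-- Continuity on `I` with values in `H^s(𝕋)`. -/
def ContHsOn (s : ℝ) (I : Set ℝ) (u : ℝ → Torus → ℂ) : Prop :=
  (∀ t ∈ I, InHs s (u t)) ∧
  ∀ t ∈ I, Tendsto (fun t' => hsNorm s (u t' - u t)) (nhdsWithin t I) (nhds 0)

/-- The cubic nonlinearity `|f|² f` (pointwise). -/
def cubic (f : Torus → ℂ) : Torus → ℂ := fun x => (‖f x‖ : ℂ) ^ 2 * f x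

/-- The filtered cubic nonlinearity `Π_τ(|Π_τ f|² Π_τ f)`. -/
def projCubic (τ : ℝ) (f : Torus → ℂ) : Torus → ℂ := projC τ (cubic (projC τ f))

/-- `v` is the (global-in-time) mild solution of the projected equation
`i∂_t v = -∂_x² v - μ Π_τ(|Π_τ v|² Π_τ v)`, `v(0) = Π_τ u₀`. -/
def IsProjSolution (μ τ : ℝ) (u₀ : Torus → ℂ) (v : ℝ → Torus → ℂ) : Prop :=
  ContL2On Set.univ v ∧
  ∀ t : ℝ, ∀ x : Torus,
    v t x = schrod t (projC τ u₀) x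
      + Complex.I * μ * ∫ s in (0 : ℝ)..t, schrod (t - s) (projCubic τ (v s)) x

/-- The cubic NLS `i∂_t u = -∂_x² u - μ |u|² u` holds in the sense of space-time
distributions on `(0,T) × 𝕋` (tested against `ψ(t) e^{-ikx}`). -/
def DistribSolOn (μ T : ℝ) (u : ℝ → Torus → ℂ) : Prop :=
  ∀ k : ℤ, ∀ ψ : ℝ → ℂ, ContDiff ℝ (⊤ : ℕ∞) ψ → tsupport ψ ⊆ Set.Ioo 0 T →
    -Complex.I * ∫ t : ℝ, deriv ψ t * fourierCoeff (u t) k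
      = (k : ℂ) ^ 2 * ∫ t : ℝ, ψ t * fourierCoeff (u t) k
        - (μ : ℂ) * ∫ t : ℝ, ψ t * fourierCoeff (cubic (u t)) k

/-- `u ∈ L⁴((0,T) × 𝕋)`. -/
def SpaceTimeL4 (T : ℝ) (u : ℝ → Torus → ℂ) : Prop :=
  MemLp (fun p : ℝ × Torus => u p.1 p.2) 4
    ((volume.restrict (Set.Ioo 0 T)).prod haarAddCircle)

/-- Space-time Fourier transform `ṽ(σ,k)` of `v : ℝ × 𝕋 → ℂ`. -/
def stFT (v : ℝ → Torus → ℂ) (σ : ℝ) (k : ℤ) : ℂ :=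
  ∫ t : ℝ, Complex.exp (-Complex.I * σ * t) * fourierCoeff (v t) k

/-- The (continuous) Bourgain `X^{s,b}` norm, valued in `ℝ≥0∞`. -/
def XcNorm (s b : ℝ) (v : ℝ → Torus → ℂ) : ℝ≥0∞ :=
  (∫⁻ σ : ℝ, ∑' k : ℤ,
      ENNReal.ofReal ((1 + |(k : ℝ)|) ^ (2 * s) * (1 + |σ + (k : ℝ) ^ 2|) ^ (2 * b)
        * ‖stFT v σ k‖ ^ 2)) ^ (1 / 2 : ℝ)

/-- The restriction norm `‖u‖_{X^{s,b}(T)}` is bounded by `M`: some extension of `u`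
from `(0,T)` has `X^{s,b}` norm at most `M`. -/
def XresBounded (s b T : ℝ) (u : ℝ → Torus → ℂ) (M : ℝ≥0∞) : Prop :=
  ∃ v : ℝ → Torus → ℂ, (∀ t ∈ Set.Ioo 0 T, v t = u t) ∧ XcNorm s b v ≤ M

/-- `u` is a Bourgain-class solution of cubic NLS on `[0,T]` with datum `u₀`. -/
def IsNLSSolution (μ T : ℝ) (u₀ : Torus → ℂ) (u : ℝ → Torus → ℂ) : Prop :=
  ContL2On (Set.Icc 0 T) u ∧ SpaceTimeL4 T u ∧
  (∃ b ∈ Set.Ioo (1 / 2 : ℝ) (5 / 8 : ℝ), ∃ v : ℝ → Torus → ℂ,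
      (∀ t ∈ Set.Ioo 0 T, v t = u t) ∧ XcNorm 0 b v < ⊤) ∧
  u 0 = u₀ ∧ DistribSolOn μ T u

/-- One step of the pointwise nonlinear flow `e^{iμτ|Π_τ f|²} Π_τ f`. -/
def lieFlow (μ τ : ℝ) (f : Torus → ℂ) : Torus → ℂ := fun x =>
  Complex.exp (Complex.I * μ * τ * (‖projC τ f x‖ : ℂ) ^ 2) * projC τ f x

/-- The filtered Lie splitting scheme `u⁰ = Π_τ u₀`,
`u^{n+1} = e^{iτ∂_x²} Π_τ (e^{iμτ|Π_τ uⁿ|²} Π_τ uⁿ)`. -/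
def lieScheme (μ τ : ℝ) (u₀ : Torus → ℂ) : ℕ → Torus → ℂ
  | 0 => projC τ u₀
  | n + 1 => schrod τ (projC τ (lieFlow μ τ (lieScheme μ τ u₀ n)))

/-- `d_τ(σ) = (e^{iτσ}-1)/τ`. -/
def dtau (τ σ : ℝ) : ℂ := (Complex.exp (Complex.I * τ * σ) - 1) / τ

/-- The discrete Bourgain `X^{s,b}_τ` norm of a sequence of functions on the torus. -/
def XdNorm (τ s b : ℝ) (u : ℤ → Torus → ℂ) : ℝ :=
  Real.sqrt (∫ σ in Set.Ioc (-(Real.pi / τ)) (Real.pi / τ),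
    ∑' k : ℤ, jbr k ^ (2 * s) * jbr ‖dtau τ (σ - (k : ℝ) ^ 2)‖ ^ (2 * b) *
      ‖(τ : ℂ) * ∑' m : ℤ, fourierCoeff (u m) k * Complex.exp (Complex.I * m * τ * σ)‖ ^ 2)

/-- The discrete space-time Lebesgue norm `‖(u_n)‖_{ℓ^p_τ L^q}`. -/
def lpLqNorm (τ p q : ℝ) (u : ℤ → Torus → ℂ) : ℝ :=
  (τ * ∑' n : ℤ, (eLpNorm (u n) (ENNReal.ofReal q) haarAddCircle).toReal ^ p) ^ (1 / p)

/-!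
Duality reduces the estimate to the discrete Strichartz inequality
`‖Π_τ v‖_{ℓ⁴_τ L⁴} ≲ ‖v‖_{X^{0,3/8}_τ}`: pairing the space-time Fourier transform of `u` with
`⟨d_τ⟩^{-3/4}` times itself gives the square of the left-hand side, and Hölder's inequality bounds
this pairing by `‖u‖_{ℓ^{4/3}_τ L^{4/3}}` times an `ℓ⁴_τ L⁴` norm.

For the Strichartz inequality, split `v` into pieces `v_j` of modulation `⟨d_τ⟩ ∼ 2^j`. The
transform of `v_j v_{j'}`, `j ≤ j'`, is a convolution over pairs `l + l' = k` of functions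
supported in arcs of length `∼ τ 2^j` and `∼ τ 2^{j'}` around `τ l²` and `τ l'²`. By Plancherel and
Cauchy-Schwarz, `‖v_j v_{j'}‖²` is controlled by the total overlap of these arcs: each overlap is
`≲ τ 2^j`, and `≲ 2^{j'/2}` pairs contribute, because `l² + l'²` must lie in an interval of length
`∼ 2^{j'}`; the cutoff `τ l² ≤ 1` prevents wrap-around on the circle. Compared with
`2^{3(j + j')/4}` the factor `2^j 2^{j'/2}` gains `2^{-|j - j'|/4}`, so Schur's test sums over
`(j, j')`.
-/

section Finset

variable {ι κ : Type*}

lemma card_le_of_forall_sub_le {P : Finset ℤ} {R : ℝ} (hR : 0 ≤ R)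
    (h : ∀ p ∈ P, ∀ q ∈ P, (p : ℝ) - q ≤ R) : (P.card : ℝ) ≤ R + 1 := by
  rcases P.eq_empty_or_nonempty with rfl | hne
  · simpa using by linarith
  have hsub : P ⊆ Finset.Icc (P.min' hne) (P.min' hne + ⌊R⌋) := by
    intro p hp
    have hfloor : p - P.min' hne ≤ ⌊R⌋ := by
      rw [Int.le_floor]
      push_cast
      exact h p hp _ (P.min'_mem hne)
    exact Finset.mem_Icc.2 ⟨P.min'_le p hp, by linarith⟩
  have hcard : (P.card : ℤ) ≤ ⌊R⌋ + 1 := by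
    have hle := Finset.card_le_card hsub
    have hfloor : 0 ≤ ⌊R⌋ := Int.floor_nonneg.2 hR
    rw [Int.card_Icc] at hle
    omega
  calc (P.card : ℝ) ≤ ⌊R⌋ + 1 := by exact_mod_cast hcard
    _ ≤ R + 1 := by gcongr; exact Int.floor_le R

lemma card_le_of_forall_sq_sub_sq_le {P : Finset ℤ} {R : ℝ} (hR : 0 ≤ R)
    (h : ∀ p ∈ P, ∀ q ∈ P, (p : ℝ) ^ 2 - (q : ℝ) ^ 2 ≤ R ^ 2) : (P.card : ℝ) ≤ 2 * (R + 1) := by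
  have hnonneg : ((P.filter (0 ≤ ·)).card : ℝ) ≤ R + 1 := by
    refine card_le_of_forall_sub_le hR fun p hp q hq => ?_
    have hpP := Finset.mem_of_mem_filter p hp
    obtain ⟨hqP, hq0⟩ := Finset.mem_filter.1 hq
    have hq0' : (0 : ℝ) ≤ q := by exact_mod_cast hq0
    by_contra! hlt
    nlinarith [h p hpP q hqP]
  have hneg : ((P.filter (¬ 0 ≤ ·)).card : ℝ) ≤ R + 1 := by
    refine card_le_of_forall_sub_le hR fun p hp q hq => ?_
    obtain ⟨hpP, hp0⟩ := Finset.mem_filter.1 hp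
    obtain ⟨hqP, hq0⟩ := Finset.mem_filter.1 hq
    have hp0' : (p : ℝ) < 0 := by exact_mod_cast not_le.1 hp0
    have hq0' : (q : ℝ) < 0 := by exact_mod_cast not_le.1 hq0
    by_contra! hlt
    nlinarith [h q hqP p hpP]
  have hsplit : ((P.filter (0 ≤ ·)).card : ℝ) + (P.filter (¬ 0 ≤ ·)).card = P.card := by
    exact_mod_cast Finset.card_filter_add_card_filter_not (s := P) (0 ≤ ·)
  linarith

lemma sum_range_pow_dist_le {r : ℝ} (hr0 : 0 ≤ r) (hr1 : r < 1) (J j : ℕ) :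
    ∑ i ∈ Finset.range J, r ^ Nat.dist j i ≤ 2 / (1 - r) := by
  have hgeom (n : ℕ) : ∑ i ∈ Finset.range n, r ^ i ≤ (1 - r)⁻¹ := by
    rw [← tsum_geometric_of_lt_one hr0 hr1]
    exact (summable_geometric_of_lt_one hr0 hr1).sum_le_tsum _ fun i _ => by positivity
  have hbelow : ∑ i ∈ Finset.range j, r ^ Nat.dist j i ≤ ∑ i ∈ Finset.range j, r ^ i := by
    rw [← Finset.sum_range_reflect (r ^ ·)]
    refine Finset.sum_le_sum fun i hi => pow_le_pow_of_le_one hr0 hr1.le ?_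
    have := Finset.mem_range.1 hi
    rw [Nat.dist_eq_sub_of_le_right this.le]
    omega
  calc ∑ i ∈ Finset.range J, r ^ Nat.dist j i
      ≤ ∑ i ∈ Finset.range (j + J), r ^ Nat.dist j i :=
        Finset.sum_le_sum_of_subset_of_nonneg (Finset.range_mono (by omega))
          fun i _ _ => by positivity
    _ = ∑ i ∈ Finset.range j, r ^ Nat.dist j i + ∑ i ∈ Finset.range J, r ^ i := by
        rw [Finset.sum_range_add]
        simp [Nat.dist_eq_sub_of_le]
    _ ≤ (1 - r)⁻¹ + (1 - r)⁻¹ := add_le_add (hbelow.trans (hgeom j)) (hgeom J)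
    _ = 2 / (1 - r) := by ring

lemma sum_sum_kernel_mul_le_of_symm {s : Finset ι} {k : ι → ι → ℝ} {M : ℝ}
    (hk : ∀ i j, 0 ≤ k i j) (hsymm : ∀ i j, k i j = k j i)
    (hM : ∀ i ∈ s, ∑ j ∈ s, k i j ≤ M) (a : ι → ℝ) :
    ∑ i ∈ s, ∑ j ∈ s, k i j * a i * a j ≤ M * ∑ i ∈ s, a i ^ 2 := by
  have hrow : ∑ i ∈ s, ∑ j ∈ s, k i j * a i ^ 2 ≤ M * ∑ i ∈ s, a i ^ 2 := by
    rw [Finset.mul_sum]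
    refine Finset.sum_le_sum fun i hi => ?_
    rw [← Finset.sum_mul]
    gcongr
    exact hM i hi
  have hcol : ∑ i ∈ s, ∑ j ∈ s, k i j * a j ^ 2 = ∑ i ∈ s, ∑ j ∈ s, k i j * a i ^ 2 := by
    rw [Finset.sum_comm]
    simp only [hsymm]
  calc ∑ i ∈ s, ∑ j ∈ s, k i j * a i * a j
      ≤ ∑ i ∈ s, ∑ j ∈ s, (k i j * a i ^ 2 + k i j * a j ^ 2) / 2 := by
        refine Finset.sum_le_sum fun i _ => Finset.sum_le_sum fun j _ => ?_
        nlinarith [mul_nonneg (hk i j) (sq_nonneg (a i - a j))]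
    _ = ∑ i ∈ s, ∑ j ∈ s, k i j * a i ^ 2 := by
        simp only [← Finset.sum_div, Finset.sum_add_distrib, hcol]
        ring
    _ ≤ M * ∑ i ∈ s, a i ^ 2 := hrow

lemma sqrt_sum_sq_norm_sum_le {E : Type*} [NormedAddCommGroup E] (s : Finset ι) (S : Finset κ)
    (z : ι → κ → E) :
    √(∑ n ∈ S, ‖∑ i ∈ s, z i n‖ ^ 2) ≤ ∑ i ∈ s, √(∑ n ∈ S, ‖z i n‖ ^ 2) := by
  have htriangle := norm_sum_le s fun i => WithLp.toLp 2 fun n : S => z i n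
  simpa [PiLp.norm_eq_of_L2, Finset.sum_attach S fun n => ‖∑ i ∈ s, z i n‖ ^ 2,
    fun i => Finset.sum_attach S fun n => ‖z i n‖ ^ 2] using htriangle

end Finset

section L2

variable {α ι κ : Type*} {m : MeasurableSpace α} {μ : Measure α}

lemma sq_norm_toLp_two {f : α → ℂ} (hf : MemLp f 2 μ) :
    ‖hf.toLp f‖ ^ 2 = ∫ x, ‖f x‖ ^ 2 ∂μ := by
  have hnonneg : 0 ≤ ∫ x, ‖f x‖ ^ 2 ∂μ := integral_nonneg fun _ => by positivity
  rw [Lp.norm_toLp, hf.eLpNorm_eq_integral_rpow_norm (by simp) (by simp)]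
  simp [← one_div, ← Real.sqrt_eq_rpow, hnonneg]

lemma sqrt_sum_integral_sq_norm_sum_le (s : Finset ι) (S : Finset κ) {Z : ι → κ → α → ℂ}
    (hZ : ∀ i n, MemLp (Z i n) 2 μ) :
    √(∑ n ∈ S, ∫ x, ‖∑ i ∈ s, Z i n x‖ ^ 2 ∂μ) ≤
      ∑ i ∈ s, √(∑ n ∈ S, ∫ x, ‖Z i n x‖ ^ 2 ∂μ) := by
  have hminkowski := sqrt_sum_sq_norm_sum_le s S fun i n => (hZ i n).toLp (Z i n)
  have hsum (n : κ) : ‖∑ i ∈ s, (hZ i n).toLp (Z i n)‖ ^ 2 = ∫ x, ‖∑ i ∈ s, Z i n x‖ ^ 2 ∂μ := by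
    have hterm : ∀ᵐ x ∂μ, ∀ i ∈ s, (hZ i n).toLp (Z i n) x = Z i n x :=
      (Filter.eventually_all_finset s).2 fun i _ => (hZ i n).coeFn_toLp
    rw [← Lp.toLp_coeFn (∑ i ∈ s, (hZ i n).toLp (Z i n)) (Lp.memLp _), sq_norm_toLp_two]
    refine integral_congr_ae ?_
    filter_upwards [Lp.coeFn_finsetSum s fun i => (hZ i n).toLp (Z i n), hterm] with x hx hterm_x
    rw [hx, Finset.sum_apply, Finset.sum_congr rfl hterm_x]
  simpa only [hsum, sq_norm_toLp_two] using hminkowski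

lemma sq_norm_integral_le_measureReal_mul {A : Set α} (hA : MeasurableSet A) (hμA : μ A ≠ ∞)
    {h : α → ℂ} (hh : MemLp h 2 μ) (hsupp : Function.support h ⊆ A) :
    ‖∫ x, h x ∂μ‖ ^ 2 ≤ μ.real A * ∫ x, ‖h x‖ ^ 2 ∂μ := by
  have hinner : ∫ x, h x ∂μ = inner ℂ (indicatorConstLp 2 hA hμA (1 : ℂ)) (hh.toLp h) := by
    rw [L2.inner_indicatorConstLp_one, setIntegral_congr_ae hA (g := h),
      setIntegral_eq_integral_of_forall_compl_eq_zero]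
    · exact fun x hx => Function.notMem_support.1 fun hx' => hx (hsupp hx')
    · filter_upwards [hh.coeFn_toLp] with x hx _ using hx
  have hnorm : ‖indicatorConstLp 2 hA hμA (1 : ℂ)‖ ^ 2 = μ.real A := by
    rw [norm_indicatorConstLp (by simp) (by simp)]
    simp [-one_div, ← Real.sqrt_eq_rpow]
  calc ‖∫ x, h x ∂μ‖ ^ 2 ≤ (‖indicatorConstLp 2 hA hμA (1 : ℂ)‖ * ‖hh.toLp h‖) ^ 2 := by
        rw [hinner]
        gcongr
        exact norm_inner_le_norm _ _
    _ = μ.real A * ∫ x, ‖h x‖ ^ 2 ∂μ := by rw [mul_pow, hnorm, sq_norm_toLp_two]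

lemma sq_norm_sum_integral_le [IsFiniteMeasure μ] (s : Finset ι) {A : ι → Set α}
    (hA : ∀ i ∈ s, MeasurableSet (A i)) {h : ι → α → ℂ} (hh : ∀ i ∈ s, MemLp (h i) 2 μ)
    (hsupp : ∀ i ∈ s, Function.support (h i) ⊆ A i) :
    ‖∑ i ∈ s, ∫ x, h i x ∂μ‖ ^ 2 ≤
      (∑ i ∈ s, μ.real (A i)) * ∑ i ∈ s, ∫ x, ‖h i x‖ ^ 2 ∂μ :=
  calc ‖∑ i ∈ s, ∫ x, h i x ∂μ‖ ^ 2 ≤ (∑ i ∈ s, ‖∫ x, h i x ∂μ‖) ^ 2 := by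
        gcongr
        exact norm_sum_le _ _
    _ ≤ _ := Finset.sum_sq_le_sum_mul_sum_of_sq_le_mul s (fun _ _ => measureReal_nonneg)
        (fun _ _ => integral_nonneg fun _ => by positivity) fun i hi =>
        sq_norm_integral_le_measureReal_mul (hA i hi) (measure_ne_top μ _) (hh i hi) (hsupp i hi)

end L2

section Convolution

open scoped Convolution

variable {G ι : Type*} [AddGroup G] [MeasurableSpace G] [MeasurableAdd₂ G] [MeasurableNeg G]
  {μ : Measure G} [IsFiniteMeasure μ] [μ.IsAddRightInvariant]

lemma ae_memLp_two_mul_comp_sub {f g : G → ℂ} (hf : MemLp f 2 μ) (hg : MemLp g 2 μ) :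
    ∀ᵐ θ ∂μ, MemLp (fun s => f s * g (θ - s)) 2 μ := by
  have hprod := Integrable.ae_convolution_exists (ContinuousLinearMap.mul ℂ ℂ)
    (hf.integrable one_le_two) (hg.integrable one_le_two)
  have hsq := Integrable.ae_convolution_exists (ContinuousLinearMap.mul ℝ ℝ)
    (hf.integrable_norm_pow two_ne_zero) (hg.integrable_norm_pow two_ne_zero)
  filter_upwards [hprod, hsq] with θ hprod_θ hsq_θ
  refine (memLp_two_iff_integrable_sq_norm hprod_θ.integrable.aestronglyMeasurable).2 ?_
  simpa [ConvolutionExistsAt, mul_pow] using hsq_θ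

lemma ae_sq_norm_sum_convolution_le (P : Finset ι) {f g : ι → G → ℂ} {A A' : ι → Set G}
    (hf : ∀ i ∈ P, MemLp (f i) 2 μ) (hg : ∀ i ∈ P, MemLp (g i) 2 μ)
    (hA : ∀ i ∈ P, MeasurableSet (A i)) (hA' : ∀ i ∈ P, MeasurableSet (A' i))
    (hfA : ∀ i ∈ P, Function.support (f i) ⊆ A i) (hgA' : ∀ i ∈ P, Function.support (g i) ⊆ A' i)
    {B : ℝ} (hB : ∀ θ, ∑ i ∈ P, μ.real (A i ∩ {s | θ - s ∈ A' i}) ≤ B) :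
    ∀ᵐ θ ∂μ, ‖∑ i ∈ P, (f i ⋆[ContinuousLinearMap.mul ℂ ℂ, μ] g i) θ‖ ^ 2 ≤
      B * ∑ i ∈ P, ((fun s => ‖f i s‖ ^ 2) ⋆[ContinuousLinearMap.mul ℝ ℝ, μ]
        fun s => ‖g i s‖ ^ 2) θ := by
  have hmemLp : ∀ᵐ θ ∂μ, ∀ i ∈ P, MemLp (fun s => f i s * g i (θ - s)) 2 μ :=
    (Filter.eventually_all_finset P).2 fun i hi => ae_memLp_two_mul_comp_sub (hf i hi) (hg i hi)
  filter_upwards [hmemLp] with θ hθ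
  have hsq (i : ι) : ∫ s, ‖f i s * g i (θ - s)‖ ^ 2 ∂μ =
      ((fun s => ‖f i s‖ ^ 2) ⋆[ContinuousLinearMap.mul ℝ ℝ, μ] fun s => ‖g i s‖ ^ 2) θ := by
    simp [convolution_def, mul_pow]
  simp only [← hsq]
  calc ‖∑ i ∈ P, (f i ⋆[ContinuousLinearMap.mul ℂ ℂ, μ] g i) θ‖ ^ 2
      ≤ (∑ i ∈ P, μ.real (A i ∩ {s | θ - s ∈ A' i})) *
          ∑ i ∈ P, ∫ s, ‖f i s * g i (θ - s)‖ ^ 2 ∂μ := by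
        refine sq_norm_sum_integral_le P (fun i hi => ?_) hθ fun i hi s hs => ?_
        · exact (hA i hi).inter (measurable_const.sub measurable_id (hA' i hi))
        · exact ⟨hfA i hi (left_ne_zero_of_mul hs), hgA' i hi (right_ne_zero_of_mul hs)⟩
    _ ≤ B * ∑ i ∈ P, ∫ s, ‖f i s * g i (θ - s)‖ ^ 2 ∂μ := by
        gcongr
        exact hB θ

lemma integrable_convolution_sq_norm {f g : G → ℂ} (hf : MemLp f 2 μ) (hg : MemLp g 2 μ) :
    Integrable ((fun s => ‖f s‖ ^ 2) ⋆[ContinuousLinearMap.mul ℝ ℝ, μ] fun s => ‖g s‖ ^ 2) μ :=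
  (hf.integrable_norm_pow two_ne_zero).integrable_convolution _
    (hg.integrable_norm_pow two_ne_zero)

lemma memLp_two_sum_convolution (P : Finset ι) {f g : ι → G → ℂ}
    (hf : ∀ i ∈ P, MemLp (f i) 2 μ) (hg : ∀ i ∈ P, MemLp (g i) 2 μ) :
    MemLp (fun θ => ∑ i ∈ P, (f i ⋆[ContinuousLinearMap.mul ℂ ℂ, μ] g i) θ) 2 μ := by
  have hmeas : AEStronglyMeasurable
      (fun θ => ∑ i ∈ P, (f i ⋆[ContinuousLinearMap.mul ℂ ℂ, μ] g i) θ) μ :=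
    (integrable_finsetSum P fun i hi => ((hf i hi).integrable one_le_two).integrable_convolution _
      ((hg i hi).integrable one_le_two)).aestronglyMeasurable
  refine (memLp_two_iff_integrable_sq_norm hmeas).2 ?_
  refine ((integrable_finsetSum P fun i hi => integrable_convolution_sq_norm (hf i hi) (hg i hi)
    ).const_mul (∑ _i ∈ P, μ.real Set.univ)).mono' (hmeas.norm.pow 2) ?_
  filter_upwards [ae_sq_norm_sum_convolution_le P (A := fun _ => Set.univ) (A' := fun _ => Set.univ)
    hf hg (by simp) (by simp) (by simp) (by simp) (B := ∑ _i ∈ P, μ.real Set.univ) (by simp)]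
    with θ hθ
  simpa using hθ

lemma integral_sq_norm_sum_convolution_le (P : Finset ι) {f g : ι → G → ℂ} {A A' : ι → Set G}
    (hf : ∀ i ∈ P, MemLp (f i) 2 μ) (hg : ∀ i ∈ P, MemLp (g i) 2 μ)
    (hA : ∀ i ∈ P, MeasurableSet (A i)) (hA' : ∀ i ∈ P, MeasurableSet (A' i))
    (hfA : ∀ i ∈ P, Function.support (f i) ⊆ A i) (hgA' : ∀ i ∈ P, Function.support (g i) ⊆ A' i)
    {B : ℝ} (hB : ∀ θ, ∑ i ∈ P, μ.real (A i ∩ {s | θ - s ∈ A' i}) ≤ B) :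
    ∫ θ, ‖∑ i ∈ P, (f i ⋆[ContinuousLinearMap.mul ℂ ℂ, μ] g i) θ‖ ^ 2 ∂μ ≤
      B * ∑ i ∈ P, (∫ s, ‖f i s‖ ^ 2 ∂μ) * ∫ s, ‖g i s‖ ^ 2 ∂μ := by
  have hint (i : ι) (hi : i ∈ P) := integrable_convolution_sq_norm (hf i hi) (hg i hi)
  have hsq (i : ι) (hi : i ∈ P) : ∫ θ, ((fun s => ‖f i s‖ ^ 2) ⋆[ContinuousLinearMap.mul ℝ ℝ, μ]
      fun s => ‖g i s‖ ^ 2) θ ∂μ = (∫ s, ‖f i s‖ ^ 2 ∂μ) * ∫ s, ‖g i s‖ ^ 2 ∂μ :=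
    integral_convolution (ContinuousLinearMap.mul ℝ ℝ)
      ((hf i hi).integrable_norm_pow two_ne_zero) ((hg i hi).integrable_norm_pow two_ne_zero)
  rw [← Finset.sum_congr rfl hsq, ← integral_finsetSum P hint, ← integral_const_mul]
  exact integral_mono_ae ((memLp_two_sum_convolution P hf hg).integrable_norm_pow two_ne_zero)
    ((integrable_finsetSum P hint).const_mul B)
    (ae_sq_norm_sum_convolution_le P hf hg hA hA' hfA hgA' hB)

end Convolution

section FourierSeries

open scoped Convolution

variable {T : ℝ} [hT : Fact (0 < T)]

lemma hasSum_sq_norm_fourierCoeff {f : AddCircle T → ℂ} (hf : MemLp f 2 haarAddCircle) :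
    HasSum (fun n => ‖fourierCoeff f n‖ ^ 2) (∫ x, ‖f x‖ ^ 2 ∂haarAddCircle) := by
  rw [← fourierCoeff_congr_ae hf.coeFn_toLp, ← sq_norm_toLp_two hf,
    ← Lp.toLp_coeFn (hf.toLp f) (Lp.memLp _), sq_norm_toLp_two, Lp.toLp_coeFn]
  exact hasSum_sq_fourierCoeff (hf.toLp f)

lemma sum_sq_norm_fourierCoeff_le {f : AddCircle T → ℂ} (hf : MemLp f 2 haarAddCircle)
    (S : Finset ℤ) : ∑ n ∈ S, ‖fourierCoeff f n‖ ^ 2 ≤ ∫ x, ‖f x‖ ^ 2 ∂haarAddCircle :=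
  sum_le_hasSum S (fun _ _ => by positivity) (hasSum_sq_norm_fourierCoeff hf)

lemma memLp_of_continuous {f : AddCircle T → ℂ} (hf : Continuous f) (p : ℝ≥0∞) :
    MemLp f p haarAddCircle :=
  hf.memLp_of_hasCompactSupport (HasCompactSupport.of_compactSpace f)

lemma fourierCoeff_fun_sum {ι : Type*} (s : Finset ι) {f : ι → AddCircle T → ℂ}
    (hf : ∀ i ∈ s, Integrable (f i) haarAddCircle) (n : ℤ) :
    fourierCoeff (fun x => ∑ i ∈ s, f i x) n = ∑ i ∈ s, fourierCoeff (f i) n := by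
  rw [← Finset.sum_fn, fourierCoeff.sum s f hf, Finset.sum_apply]

lemma fourierCoeff_sum_mul_fourier (K : Finset ℤ) (c : ℤ → ℂ) (n : ℤ) :
    fourierCoeff (fun x : AddCircle T => ∑ k ∈ K, c k * fourier k x) n =
      if n ∈ K then c n else 0 := by
  rw [fourierCoeff_fun_sum K fun k _ => (memLp_of_continuous (by fun_prop) 1).integrable le_rfl]
  simp only [fourierCoeff.const_mul, congrFun (fourierCoeff_fourier _) n, Pi.single_apply, mul_ite,
    mul_one, mul_zero, Finset.sum_ite_eq]

lemma integral_sq_norm_sum_mul_fourier (K : Finset ℤ) (c : ℤ → ℂ) :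
    ∫ x : AddCircle T, ‖∑ k ∈ K, c k * fourier k x‖ ^ 2 ∂haarAddCircle = ∑ k ∈ K, ‖c k‖ ^ 2 := by
  have hparseval := hasSum_sq_norm_fourierCoeff (T := T)
    (f := fun x => ∑ k ∈ K, c k * fourier k x) (memLp_of_continuous (by fun_prop) 2)
  simp only [fourierCoeff_sum_mul_fourier] at hparseval
  rw [← hparseval.tsum_eq, tsum_eq_sum (s := K) (by simp +contextual)]
  exact Finset.sum_congr rfl fun k hk => by rw [if_pos hk]

lemma fourierCoeff_convolution {f g : AddCircle T → ℂ} (hf : Integrable f haarAddCircle)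
    (hg : Integrable g haarAddCircle) (n : ℤ) :
    fourierCoeff (f ⋆[ContinuousLinearMap.mul ℂ ℂ, haarAddCircle] g) n =
      fourierCoeff f n * fourierCoeff g n := by
  have hmodulate : (fun θ => fourier (-n) θ • (f ⋆[ContinuousLinearMap.mul ℂ ℂ, haarAddCircle] g) θ)
      = (fun s => fourier (-n) s • f s) ⋆[ContinuousLinearMap.mul ℂ ℂ, haarAddCircle]
        fun s => fourier (-n) s • g s := by
    ext θ
    simp only [convolution_def, ← integral_smul]
    refine integral_congr_ae (ae_of_all _ fun s => ?_)
    have hadd : fourier (-n) θ = fourier (-n) s * fourier (-n) (θ - s) := by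
      simp only [fourier_apply, ← Circle.coe_mul, ← AddCircle.toCircle_add, ← smul_add,
        add_sub_cancel]
    simp only [smul_eq_mul, ContinuousLinearMap.mul_apply', hadd]
    ring
  simp only [fourierCoeff]
  rw [hmodulate, integral_convolution _ (hf.fourier_smul _) (hg.fourier_smul _)]
  rfl

end FourierSeries

section Bilinear

open scoped Convolution Pointwise

variable {T : ℝ} [hT : Fact (0 < T)]

/-- The sequence of trigonometric polynomials `x ↦ ∑ k ∈ K, (V k)^(n) e_k(x)` whose space-time
Fourier transform is the finite family `V` of functions of the time frequency. -/
def synthesis (K : Finset ℤ) (V : ℤ → AddCircle T → ℂ) (n : ℤ) (x : AddCircle T) : ℂ :=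
  ∑ k ∈ K, fourierCoeff (V k) n * fourier k x

lemma continuous_synthesis (K : Finset ℤ) (V : ℤ → AddCircle T → ℂ) (n : ℤ) :
    Continuous (synthesis K V n) := by
  unfold synthesis
  fun_prop

/-- The pairs of frequencies in `K × K` with sum `k`. -/
def pairsWithSum (K : Finset ℤ) (k : ℤ) : Finset (ℤ × ℤ) :=
  (K ×ˢ K).filter fun p => p.1 + p.2 = k

lemma mem_pairsWithSum {K : Finset ℤ} {k : ℤ} {p : ℤ × ℤ} :
    p ∈ pairsWithSum K k ↔ (p.1 ∈ K ∧ p.2 ∈ K) ∧ p.1 + p.2 = k := by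
  rw [pairsWithSum, Finset.mem_filter, Finset.mem_product]

lemma sum_sum_pairsWithSum {M : Type*} [AddCommMonoid M] (K : Finset ℤ) (F : ℤ → ℤ → M) :
    ∑ k ∈ K + K, ∑ p ∈ pairsWithSum K k, F p.1 p.2 = ∑ i ∈ K, ∑ j ∈ K, F i j := by
  rw [← Finset.sum_product']
  refine Finset.sum_fiberwise_of_maps_to (fun p hp => ?_) _
  exact Finset.add_mem_add (Finset.mem_product.1 hp).1 (Finset.mem_product.1 hp).2

lemma synthesis_mul_synthesis (K : Finset ℤ) {V V' : ℤ → AddCircle T → ℂ}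
    (hV : ∀ k ∈ K, MemLp (V k) 2 haarAddCircle) (hV' : ∀ k ∈ K, MemLp (V' k) 2 haarAddCircle)
    (n : ℤ) (x : AddCircle T) :
    synthesis K V n x * synthesis K V' n x =
      synthesis (K + K) (fun k θ => ∑ p ∈ pairsWithSum K k,
        (V p.1 ⋆[ContinuousLinearMap.mul ℂ ℂ, haarAddCircle] V' p.2) θ) n x := by
  have hcoeff (k : ℤ) : fourierCoeff (fun θ => ∑ p ∈ pairsWithSum K k,
      (V p.1 ⋆[ContinuousLinearMap.mul ℂ ℂ, haarAddCircle] V' p.2) θ) n =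
      ∑ p ∈ pairsWithSum K k, fourierCoeff (V p.1) n * fourierCoeff (V' p.2) n := by
    have hint (p : ℤ × ℤ) (hp : p ∈ pairsWithSum K k) : Integrable (V p.1) haarAddCircle ∧
        Integrable (V' p.2) haarAddCircle :=
      ⟨(hV _ (mem_pairsWithSum.1 hp).1.1).integrable one_le_two,
        (hV' _ (mem_pairsWithSum.1 hp).1.2).integrable one_le_two⟩
    rw [fourierCoeff_fun_sum _ fun p hp => (hint p hp).1.integrable_convolution _ (hint p hp).2]
    exact Finset.sum_congr rfl fun p hp => fourierCoeff_convolution (hint p hp).1 (hint p hp).2 n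
  simp only [synthesis, hcoeff]
  rw [Finset.sum_mul_sum, ← sum_sum_pairsWithSum]
  refine Finset.sum_congr rfl fun k _ => ?_
  rw [Finset.sum_mul]
  refine Finset.sum_congr rfl fun p hp => ?_
  rw [← (mem_pairsWithSum.1 hp).2, fourier_add]
  ring

lemma sum_integral_sq_norm_synthesis_mul_le (K S : Finset ℤ) {V V' : ℤ → AddCircle T → ℂ}
    {A A' : ℤ → Set (AddCircle T)}
    (hV : ∀ k ∈ K, MemLp (V k) 2 haarAddCircle) (hV' : ∀ k ∈ K, MemLp (V' k) 2 haarAddCircle)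
    (hA : ∀ k ∈ K, MeasurableSet (A k)) (hA' : ∀ k ∈ K, MeasurableSet (A' k))
    (hVA : ∀ k ∈ K, Function.support (V k) ⊆ A k)
    (hVA' : ∀ k ∈ K, Function.support (V' k) ⊆ A' k) {B : ℝ}
    (hB : ∀ k θ, ∑ p ∈ pairsWithSum K k,
      haarAddCircle.real (A p.1 ∩ {s | θ - s ∈ A' p.2}) ≤ B) :
    ∑ n ∈ S, ∫ x, ‖synthesis K V n x * synthesis K V' n x‖ ^ 2 ∂haarAddCircle ≤
      B * ((∑ k ∈ K, ∫ θ, ‖V k θ‖ ^ 2 ∂haarAddCircle) *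
        ∑ k ∈ K, ∫ θ, ‖V' k θ‖ ^ 2 ∂haarAddCircle) := by
  have hmem {k : ℤ} {p : ℤ × ℤ} (hp : p ∈ pairsWithSum K k) := (mem_pairsWithSum.1 hp).1
  simp only [synthesis_mul_synthesis K hV hV']
  simp only [synthesis, integral_sq_norm_sum_mul_fourier]
  rw [Finset.sum_comm]
  calc _ ≤ ∑ k ∈ K + K, B * ∑ p ∈ pairsWithSum K k,
        (∫ θ, ‖V p.1 θ‖ ^ 2 ∂haarAddCircle) * ∫ θ, ‖V' p.2 θ‖ ^ 2 ∂haarAddCircle := by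
        refine Finset.sum_le_sum fun k _ => (sum_sq_norm_fourierCoeff_le
          (memLp_two_sum_convolution _ (fun p hp => hV _ (hmem hp).1)
            fun p hp => hV' _ (hmem hp).2) S).trans ?_
        exact integral_sq_norm_sum_convolution_le _ (fun p hp => hV _ (hmem hp).1)
          (fun p hp => hV' _ (hmem hp).2) (fun p hp => hA _ (hmem hp).1)
          (fun p hp => hA' _ (hmem hp).2) (fun p hp => hVA _ (hmem hp).1)
          (fun p hp => hVA' _ (hmem hp).2) (hB k)
    _ = _ := by
        rw [← Finset.mul_sum, Finset.sum_mul_sum]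
        exact congrArg _ (sum_sum_pairsWithSum K fun i j =>
          (∫ θ, ‖V i θ‖ ^ 2 ∂haarAddCircle) * ∫ θ, ‖V' j θ‖ ^ 2 ∂haarAddCircle)

end Bilinear

section Parabola

/-- The point `τ k²` of the time-frequency circle, around which solutions of the free Schrödinger
equation concentrate at spatial frequency `k`. -/
def parabolaPoint (τ : ℝ) (k : ℤ) : Torus := ((τ * (k : ℝ) ^ 2 : ℝ) : Torus)

lemma norm_coe_torus_of_abs_le_pi {x : ℝ} (hx : |x| ≤ Real.pi) : ‖(x : Torus)‖ = |x| := by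
  have hpi : 0 < 2 * Real.pi := Real.two_pi_pos
  rw [AddCircle.norm_coe_eq_abs_iff _ hpi.ne', abs_of_pos hpi]
  linarith

lemma measureReal_closedBall_torus_le (a : Torus) {r : ℝ} (hr : 0 ≤ r) :
    haarAddCircle.real (Metric.closedBall a r) ≤ r / Real.pi := by
  have hvolume : (2 * Real.pi) * haarAddCircle.real (Metric.closedBall a r) =
      min (2 * Real.pi) (2 * r) := by
    have hball := AddCircle.volume_closedBall (T := 2 * Real.pi) (x := a) r
    rw [volume_eq_smul_haarAddCircle, Measure.smul_apply] at hball
    simpa only [Measure.real, smul_eq_mul, ENNReal.toReal_mul,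
      ENNReal.toReal_ofReal Real.two_pi_pos.le,
      ENNReal.toReal_ofReal (le_min Real.two_pi_pos.le (mul_nonneg zero_le_two hr))]
      using congrArg ENNReal.toReal hball
  rw [le_div_iff₀ Real.pi_pos]
  linarith [min_le_right (2 * Real.pi) (2 * r)]

-- `l² + l'²` is determined by `l + l' = k` and `l - l'`, being `(k² + (l - l')²) / 2`.
lemma sq_sub_sq_le_of_mem_pairsWithSum {τ : ℝ} (hτ : 0 < τ) {K : Finset ℤ}
    (hK : ∀ k ∈ K, τ * (k : ℝ) ^ 2 ≤ 1) {k : ℤ} {p q : ℤ × ℤ} (hp : p ∈ pairsWithSum K k)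
    (hq : q ∈ pairsWithSum K k) {θ : Torus} {ρ : ℝ}
    (hpθ : ‖θ - (parabolaPoint τ p.1 + parabolaPoint τ p.2)‖ ≤ ρ)
    (hqθ : ‖θ - (parabolaPoint τ q.1 + parabolaPoint τ q.2)‖ ≤ ρ) :
    ((p.1 - p.2 : ℤ) : ℝ) ^ 2 - ((q.1 - q.2 : ℤ) : ℝ) ^ 2 ≤ 4 * ρ / τ := by
  obtain ⟨⟨hp₁, hp₂⟩, hpk⟩ := mem_pairsWithSum.1 hp
  obtain ⟨⟨hq₁, hq₂⟩, hqk⟩ := mem_pairsWithSum.1 hq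
  set x : ℝ := τ * (p.1 : ℝ) ^ 2 + τ * (p.2 : ℝ) ^ 2 with hx
  set y : ℝ := τ * (q.1 : ℝ) ^ 2 + τ * (q.2 : ℝ) ^ 2 with hy
  have hxy : x - y = τ * (((p.1 - p.2 : ℤ) : ℝ) ^ 2 - ((q.1 - q.2 : ℤ) : ℝ) ^ 2) / 2 := by
    have hsum : (p.1 : ℝ) + p.2 = q.1 + q.2 := by exact_mod_cast hpk.trans hqk.symm
    push_cast
    linear_combination τ / 2 * (p.1 + p.2 + q.1 + q.2) * hsum
  have hcircle : ‖((x - y : ℝ) : Torus)‖ ≤ 2 * ρ := by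
    have hsplit : ((x - y : ℝ) : Torus) = (θ - (parabolaPoint τ q.1 + parabolaPoint τ q.2)) -
        (θ - (parabolaPoint τ p.1 + parabolaPoint τ p.2)) := by
      simp only [parabolaPoint, hx, hy, AddCircle.coe_sub, AddCircle.coe_add]
      abel
    rw [hsplit]
    linarith [norm_sub_le (θ - (parabolaPoint τ q.1 + parabolaPoint τ q.2))
      (θ - (parabolaPoint τ p.1 + parabolaPoint τ p.2))]
  have habs : |x - y| ≤ Real.pi := by
    have hx0 : 0 ≤ x := by positivity
    have hy0 : 0 ≤ y := by positivity
    rw [abs_le]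
    constructor <;> linarith [Real.pi_gt_three, hK _ hp₁, hK _ hp₂, hK _ hq₁, hK _ hq₂]
  rw [norm_coe_torus_of_abs_le_pi habs, hxy] at hcircle
  rw [le_div_iff₀ hτ]
  linarith [le_abs_self (τ * (((p.1 - p.2 : ℤ) : ℝ) ^ 2 - ((q.1 - q.2 : ℤ) : ℝ) ^ 2) / 2)]

lemma card_le_of_norm_sub_parabolaPoint_add_le {τ : ℝ} (hτ : 0 < τ) {K : Finset ℤ}
    (hK : ∀ k ∈ K, τ * (k : ℝ) ^ 2 ≤ 1) {k : ℤ} {P : Finset (ℤ × ℤ)}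
    (hP : P ⊆ pairsWithSum K k) {θ : Torus} {ρ : ℝ} (hρ : 0 ≤ ρ)
    (hPθ : ∀ p ∈ P, ‖θ - (parabolaPoint τ p.1 + parabolaPoint τ p.2)‖ ≤ ρ) :
    (P.card : ℝ) ≤ 2 * (√(4 * ρ / τ) + 1) := by
  have hinj : Set.InjOn (fun p : ℤ × ℤ => p.1 - p.2) P := by
    intro p hp q hq hpq
    have hpk := (mem_pairsWithSum.1 (hP hp)).2
    have hqk := (mem_pairsWithSum.1 (hP hq)).2
    dsimp only at hpq
    ext <;> omega
  rw [← Finset.card_image_of_injOn hinj]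
  refine card_le_of_forall_sq_sub_sq_le (Real.sqrt_nonneg _) fun d hd d' hd' => ?_
  obtain ⟨p, hp, rfl⟩ := Finset.mem_image.1 hd
  obtain ⟨q, hq, rfl⟩ := Finset.mem_image.1 hd'
  rw [Real.sq_sqrt (by positivity)]
  exact sq_sub_sq_le_of_mem_pairsWithSum hτ hK (hP hp) (hP hq) (hPθ p hp) (hPθ q hq)

lemma norm_sub_add_le_of_mem_closedBall {E : Type*} [SeminormedAddCommGroup E] {a a' s θ : E}
    {r r' : ℝ} (hs : s ∈ Metric.closedBall a r) (hθs : θ - s ∈ Metric.closedBall a' r') :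
    ‖θ - (a + a')‖ ≤ r + r' := by
  rw [mem_closedBall_iff_norm] at hs hθs
  rw [show θ - (a + a') = (s - a) + (θ - s - a') by abel]
  exact norm_add_le_of_le hs hθs

lemma sum_measureReal_inter_closedBall_parabolaPoint_le {τ : ℝ} (hτ : 0 < τ) {K : Finset ℤ}
    (hK : ∀ k ∈ K, τ * (k : ℝ) ^ 2 ≤ 1) {r r' : ℝ} (hr : 0 ≤ r) (hr' : 0 ≤ r') (k : ℤ)
    (θ : Torus) :
    ∑ p ∈ pairsWithSum K k, haarAddCircle.real (Metric.closedBall (parabolaPoint τ p.1) r ∩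
      {s | θ - s ∈ Metric.closedBall (parabolaPoint τ p.2) r'}) ≤
      2 * (√(4 * (r + r') / τ) + 1) * (r / Real.pi) := by
  classical
  set A : ℤ × ℤ → Set Torus := fun p => Metric.closedBall (parabolaPoint τ p.1) r ∩
    {s | θ - s ∈ Metric.closedBall (parabolaPoint τ p.2) r'}
  set P := (pairsWithSum K k).filter fun p => (A p).Nonempty
  have hcard : (P.card : ℝ) ≤ 2 * (√(4 * (r + r') / τ) + 1) := by
    refine card_le_of_norm_sub_parabolaPoint_add_le hτ hK (Finset.filter_subset _ _) (θ := θ)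
      (add_nonneg hr hr') fun p hp => ?_
    obtain ⟨s, hs, hθs⟩ := (Finset.mem_filter.1 hp).2
    exact norm_sub_add_le_of_mem_closedBall hs hθs
  have hterm (p : ℤ × ℤ) : haarAddCircle.real (A p) ≤ r / Real.pi :=
    (measureReal_mono Set.inter_subset_left).trans (measureReal_closedBall_torus_le _ hr)
  calc ∑ p ∈ pairsWithSum K k, haarAddCircle.real (A p) = ∑ p ∈ P, haarAddCircle.real (A p) := by
        refine (Finset.sum_filter_of_ne fun p _ hne => ?_).symm
        rw [Set.nonempty_iff_ne_empty]
        exact fun hempty => hne (by rw [hempty, measureReal_empty])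
    _ ≤ P.card * (r / Real.pi) := by
        simpa using Finset.sum_le_card_nsmul P _ _ fun p _ => hterm p
    _ ≤ 2 * (√(4 * (r + r') / τ) + 1) * (r / Real.pi) := by gcongr

end Parabola

section DyadicShell

variable {α : Type*} {w : α → ℝ}

/-- The set where `w` lies in `[2^j, 2^(j+1))`; for `j = 0` it contains all points where
`w < 1`. -/
def dyadicShell (w : α → ℝ) (j : ℕ) : Set α := {x | Nat.log 2 ⌊w x⌋₊ = j}

lemma measurableSet_dyadicShell [MeasurableSpace α] (hw : Measurable w) (j : ℕ) :
    MeasurableSet (dyadicShell w j) :=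
  ((measurable_from_top (f := Nat.log 2)).comp (Nat.measurable_floor.comp hw))
    (measurableSet_singleton j)

lemma lt_two_pow_succ_of_mem_dyadicShell {x : α} {j : ℕ} (hx : x ∈ dyadicShell w j) :
    w x < 2 ^ (j + 1) := by
  subst hx
  exact_mod_cast Nat.lt_of_floor_lt (Nat.lt_pow_succ_log_self one_lt_two ⌊w x⌋₊)

lemma two_pow_le_of_mem_dyadicShell {x : α} (hw : 1 ≤ w x) {j : ℕ} (hx : x ∈ dyadicShell w j) :
    2 ^ j ≤ w x := by
  subst hx
  have hfloor : ⌊w x⌋₊ ≠ 0 := (Nat.floor_pos.2 hw).ne'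
  exact_mod_cast (Nat.le_floor_iff (zero_le_one.trans hw)).1 (Nat.pow_log_le_self 2 hfloor)

lemma sum_range_indicator_dyadicShell {M : Type*} [AddCommMonoid M] {x : α} {J : ℕ}
    (hw : 1 ≤ w x) (hJ : w x < 2 ^ J) (f : ℕ → α → M) :
    ∑ j ∈ Finset.range J, (dyadicShell w j).indicator (f j) x = f (Nat.log 2 ⌊w x⌋₊) x := by
  classical
  have hlog : Nat.log 2 ⌊w x⌋₊ < J := by
    refine Nat.log_lt_of_lt_pow (Nat.floor_pos.2 hw).ne' ?_
    rw [Nat.floor_lt (zero_le_one.trans hw)]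
    exact_mod_cast hJ
  simp [dyadicShell, Set.indicator_apply, hlog]

lemma sum_range_mul_integral_sq_norm_indicator_dyadicShell_le [MeasurableSpace α] {μ : Measure α}
    (hwm : Measurable w) (hw : ∀ x, 1 ≤ w x) {J : ℕ} (hJ : ∀ x, w x < 2 ^ J) {a : ℝ} (ha : 0 ≤ a)
    {f : α → ℂ} (hf : MemLp f 2 μ) (hwf : Integrable (fun x => w x ^ a * ‖f x‖ ^ 2) μ) :
    ∑ j ∈ Finset.range J, ((2 : ℝ) ^ j) ^ a * ∫ x, ‖(dyadicShell w j).indicator f x‖ ^ 2 ∂μ ≤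
      ∫ x, w x ^ a * ‖f x‖ ^ 2 ∂μ := by
  have hint (j : ℕ) :
      Integrable (fun x => ((2 : ℝ) ^ j) ^ a * ‖(dyadicShell w j).indicator f x‖ ^ 2) μ :=
    ((hf.indicator (measurableSet_dyadicShell hwm j)).integrable_norm_pow two_ne_zero).const_mul _
  simp only [← integral_const_mul]
  rw [← integral_finsetSum _ fun j _ => hint j]
  refine integral_mono (integrable_finsetSum _ fun j _ => hint j) hwf fun x => ?_
  have hindicator (j : ℕ) : ((2 : ℝ) ^ j) ^ a * ‖(dyadicShell w j).indicator f x‖ ^ 2 =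
      (dyadicShell w j).indicator (fun x => ((2 : ℝ) ^ j) ^ a * ‖f x‖ ^ 2) x := by
    by_cases hx : x ∈ dyadicShell w j <;> simp [hx]
  simp only [hindicator]
  rw [sum_range_indicator_dyadicShell (hw x) (hJ x)]
  gcongr
  exact two_pow_le_of_mem_dyadicShell (hw x) rfl

end DyadicShell

section Modulation

variable {τ : ℝ}

lemma continuous_jbr : Continuous jbr := by
  unfold jbr
  fun_prop

lemma one_le_jbr (x : ℝ) : 1 ≤ jbr x :=
  Real.one_le_sqrt.2 (le_add_of_nonneg_right (sq_nonneg x))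

lemma le_jbr (x : ℝ) : x ≤ jbr x :=
  Real.le_sqrt_of_sq_le (le_add_of_nonneg_left zero_le_one)

lemma jbr_le_jbr {x y : ℝ} (hx : 0 ≤ x) (hxy : x ≤ y) : jbr x ≤ jbr y := by
  unfold jbr
  gcongr

lemma fourier_coe_torus (m : ℤ) (x : ℝ) :
    fourier m (x : Torus) = Complex.exp (Complex.I * m * x) := by
  rw [fourier_coe_apply]
  congr 1
  have hpi : (Real.pi : ℂ) ≠ 0 := by exact_mod_cast Real.pi_ne_zero
  push_cast
  field_simp

lemma norm_le_mul_norm_fourier_one_sub_one (y : Torus) :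
    ‖y‖ ≤ Real.pi / 2 * ‖fourier 1 y - 1‖ := by
  obtain ⟨x, hx, rfl⟩ :
      y ∈ ((↑) : ℝ → Torus) '' Set.Ioc (-Real.pi) (-Real.pi + 2 * Real.pi) :=
    AddCircle.coe_image_Ioc_eq (2 * Real.pi) (-Real.pi) ▸ Set.mem_univ y
  have habs : |x| ≤ Real.pi := abs_le.2 ⟨hx.1.le, by linarith [hx.2]⟩
  have hnorm : ‖fourier 1 (x : Torus) - 1‖ = 2 * |Real.sin (x / 2)| := by
    rw [fourier_coe_torus, Int.cast_one, mul_one, Complex.norm_exp_I_mul_ofReal_sub_one, norm_mul,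
      Real.norm_eq_abs, Real.norm_eq_abs, abs_two]
  have hjordan : 2 / Real.pi * (|x| / 2) ≤ |Real.sin (x / 2)| := by
    simpa only [abs_div, abs_two] using Real.mul_abs_le_abs_sin (x := x / 2)
      (by rw [abs_div, abs_two]; linarith)
  rw [norm_coe_torus_of_abs_le_pi habs, hnorm]
  calc |x| = Real.pi / 2 * (2 * (2 / Real.pi * (|x| / 2))) := by
        field_simp [Real.pi_ne_zero]
    _ ≤ Real.pi / 2 * (2 * |Real.sin (x / 2)|) := by gcongr

/-- The weight `⟨d_τ(σ - k²)⟩` of the discrete Bourgain norm as a function of `θ = τ σ` on the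
circle. -/
def modulation (τ : ℝ) (k : ℤ) (θ : Torus) : ℝ :=
  jbr (‖fourier 1 (θ - parabolaPoint τ k) - 1‖ / τ)

lemma continuous_modulation (τ : ℝ) (k : ℤ) : Continuous (modulation τ k) :=
  continuous_jbr.comp (by fun_prop)

lemma one_le_modulation (τ : ℝ) (k : ℤ) (θ : Torus) : 1 ≤ modulation τ k θ := one_le_jbr _

lemma modulation_pos (τ : ℝ) (k : ℤ) (θ : Torus) : 0 < modulation τ k θ :=
  zero_lt_one.trans_le (one_le_modulation τ k θ)

lemma continuous_modulation_rpow (τ a : ℝ) (k : ℤ) : Continuous fun θ => modulation τ k θ ^ a :=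
  (continuous_modulation τ k).rpow_const fun θ => Or.inl (modulation_pos τ k θ).ne'

lemma exists_modulation_lt_two_pow (hτ : 0 < τ) : ∃ J : ℕ, ∀ k θ, modulation τ k θ < 2 ^ J := by
  obtain ⟨J, hJ⟩ := pow_unbounded_of_one_lt (jbr (2 / τ)) one_lt_two
  refine ⟨J, fun k θ => (jbr_le_jbr (by positivity) ?_).trans_lt hJ⟩
  gcongr
  refine (norm_sub_le _ _).trans_eq ?_
  rw [fourier_apply, Circle.norm_coe, norm_one, one_add_one_eq_two]

lemma integrable_modulation_rpow_mul (τ a : ℝ) (k : ℤ) {f : Torus → ℂ}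
    (hf : MemLp f 2 haarAddCircle) :
    Integrable (fun θ => modulation τ k θ ^ a * ‖f θ‖ ^ 2) haarAddCircle := by
  obtain ⟨B, hB⟩ := isCompact_univ.exists_bound_of_continuousOn
    (continuous_modulation_rpow τ a k).continuousOn
  exact (hf.integrable_norm_pow two_ne_zero).bdd_mul
    (continuous_modulation_rpow τ a k).aestronglyMeasurable (ae_of_all _ fun θ => hB θ trivial)

/-- The square of the norm of the family `(V k)` in the space `L²` weighted by `modulation ^ a`;
for `a = 2b` it is the square of an `X^{0,b}_τ` norm, up to a constant factor. -/
def modulationEnergy (τ a : ℝ) (K : Finset ℤ) (V : ℤ → Torus → ℂ) : ℝ :=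
  ∑ k ∈ K, ∫ θ, modulation τ k θ ^ a * ‖V k θ‖ ^ 2 ∂haarAddCircle

lemma modulationEnergy_nonneg (τ a : ℝ) (K : Finset ℤ) (V : ℤ → Torus → ℂ) :
    0 ≤ modulationEnergy τ a K V :=
  Finset.sum_nonneg fun k _ => integral_nonneg fun θ =>
    mul_nonneg (Real.rpow_nonneg (modulation_pos τ k θ).le a) (sq_nonneg _)

/-- The part of the family `V` with modulation of size `2^j`. -/
def shellPart (τ : ℝ) (V : ℤ → Torus → ℂ) (j : ℕ) (k : ℤ) : Torus → ℂ :=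
  (dyadicShell (modulation τ k) j).indicator (V k)

/-- The square of the `L²` norm of the part of `V` with modulation of size `2^j`. -/
def shellMass (τ : ℝ) (K : Finset ℤ) (V : ℤ → Torus → ℂ) (j : ℕ) : ℝ :=
  ∑ k ∈ K, ∫ θ, ‖shellPart τ V j k θ‖ ^ 2 ∂haarAddCircle

lemma shellMass_nonneg (τ : ℝ) (K : Finset ℤ) (V : ℤ → Torus → ℂ) (j : ℕ) :
    0 ≤ shellMass τ K V j :=
  Finset.sum_nonneg fun _ _ => integral_nonneg fun _ => sq_nonneg _

lemma memLp_shellPart {V : ℤ → Torus → ℂ} {k : ℤ} (hV : MemLp (V k) 2 haarAddCircle) (τ : ℝ)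
    (j : ℕ) : MemLp (shellPart τ V j k) 2 haarAddCircle :=
  hV.indicator (measurableSet_dyadicShell (continuous_modulation τ k).measurable j)

lemma support_shellPart_subset_closedBall (hτ : 0 < τ) (V : ℤ → Torus → ℂ) (j : ℕ) (k : ℤ) :
    Function.support (shellPart τ V j k) ⊆
      Metric.closedBall (parabolaPoint τ k) (Real.pi * τ * 2 ^ j) := by
  intro θ hθ
  have hlt := lt_two_pow_succ_of_mem_dyadicShell (Set.mem_of_indicator_ne_zero hθ)
  have hchord : ‖fourier 1 (θ - parabolaPoint τ k) - 1‖ ≤ 2 ^ (j + 1) * τ :=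
    (div_le_iff₀ hτ).1 ((le_jbr _).trans hlt.le)
  rw [mem_closedBall_iff_norm]
  calc ‖θ - parabolaPoint τ k‖
      ≤ Real.pi / 2 * ‖fourier 1 (θ - parabolaPoint τ k) - 1‖ :=
        norm_le_mul_norm_fourier_one_sub_one _
    _ ≤ Real.pi / 2 * (2 ^ (j + 1) * τ) := by gcongr
    _ = Real.pi * τ * 2 ^ j := by ring

lemma synthesis_eq_sum_synthesis_shellPart {J : ℕ} (hJ : ∀ k θ, modulation τ k θ < 2 ^ J)
    {K : Finset ℤ} {V : ℤ → Torus → ℂ} (hV : ∀ k ∈ K, MemLp (V k) 2 haarAddCircle) (n : ℤ)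
    (x : Torus) :
    synthesis K V n x = ∑ j ∈ Finset.range J, synthesis K (shellPart τ V j) n x := by
  simp only [synthesis]
  rw [Finset.sum_comm]
  refine Finset.sum_congr rfl fun k hk => ?_
  rw [← Finset.sum_mul, ← fourierCoeff_fun_sum _ fun j _ =>
    (memLp_shellPart (hV k hk) τ j).integrable one_le_two]
  congr 2
  ext θ
  exact (sum_range_indicator_dyadicShell (one_le_modulation τ k θ) (hJ k θ) fun _ => V k).symm

lemma sum_range_rpow_mul_shellMass_le {J : ℕ} (hJ : ∀ k θ, modulation τ k θ < 2 ^ J) {a : ℝ}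
    (ha : 0 ≤ a) {K : Finset ℤ} {V : ℤ → Torus → ℂ}
    (hV : ∀ k ∈ K, MemLp (V k) 2 haarAddCircle) :
    ∑ j ∈ Finset.range J, ((2 : ℝ) ^ j) ^ a * shellMass τ K V j ≤ modulationEnergy τ a K V := by
  simp only [shellMass, Finset.mul_sum]
  rw [Finset.sum_comm]
  exact Finset.sum_le_sum fun k hk => sum_range_mul_integral_sq_norm_indicator_dyadicShell_le
    (continuous_modulation τ k).measurable (one_le_modulation τ k) (hJ k) ha (hV k hk)
    (integrable_modulation_rpow_mul τ a k (hV k hk))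

end Modulation

section Strichartz

variable {τ : ℝ} {K : Finset ℤ} {V : ℤ → Torus → ℂ}

lemma sum_measureReal_inter_closedBall_dyadic_le (hτ : 0 < τ)
    (hK : ∀ k ∈ K, τ * (k : ℝ) ^ 2 ≤ 1) {j j' : ℕ} (hj : j ≤ j') (k : ℤ) (θ : Torus) :
    ∑ p ∈ pairsWithSum K k,
      haarAddCircle.real (Metric.closedBall (parabolaPoint τ p.1) (Real.pi * τ * 2 ^ j) ∩
        {s | θ - s ∈ Metric.closedBall (parabolaPoint τ p.2) (Real.pi * τ * 2 ^ j')}) ≤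
      14 * τ * (2 ^ j * √(2 ^ j')) := by
  have hsqrt : √(4 * (Real.pi * τ * 2 ^ j + Real.pi * τ * 2 ^ j') / τ) ≤ 6 * √(2 ^ j') := by
    rw [show (6 : ℝ) * √(2 ^ j') = √(36 * 2 ^ j') by
      rw [Real.sqrt_mul (by norm_num), show (36 : ℝ) = 6 ^ 2 by norm_num,
        Real.sqrt_sq (by norm_num)]]
    refine Real.sqrt_le_sqrt ?_
    calc 4 * (Real.pi * τ * 2 ^ j + Real.pi * τ * 2 ^ j') / τ
        ≤ 4 * (Real.pi * τ * 2 ^ j' + Real.pi * τ * 2 ^ j') / τ := by gcongr; exact one_le_two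
      _ = 8 * Real.pi * 2 ^ j' := by field_simp; ring
      _ ≤ 36 * 2 ^ j' := by gcongr; linarith [Real.pi_le_four]
  have hone : 1 ≤ √((2 : ℝ) ^ j') := Real.one_le_sqrt.2 (one_le_pow₀ one_le_two)
  calc _ ≤ 2 * (√(4 * (Real.pi * τ * 2 ^ j + Real.pi * τ * 2 ^ j') / τ) + 1) *
        (Real.pi * τ * 2 ^ j / Real.pi) :=
        sum_measureReal_inter_closedBall_parabolaPoint_le hτ hK (by positivity) (by positivity) k θ
    _ ≤ 2 * (6 * √(2 ^ j') + √(2 ^ j')) * (Real.pi * τ * 2 ^ j / Real.pi) := by gcongr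
    _ = 14 * τ * (2 ^ j * √(2 ^ j')) := by field_simp; ring

/-- The decay rate `2^(-1/8)` of the interaction of two modulation shells per dyadic step. -/
def shellDecay : ℝ := 2 ^ (-(1 / 8) : ℝ)

lemma shellDecay_nonneg : 0 ≤ shellDecay := Real.rpow_nonneg zero_le_two _

lemma shellDecay_lt_one : shellDecay < 1 :=
  Real.rpow_lt_one_of_one_lt_of_neg one_lt_two (by norm_num)

lemma two_pow_mul_sqrt_two_pow {j j' : ℕ} (hj : j ≤ j') :
    (2 : ℝ) ^ j * √(2 ^ j') = (shellDecay ^ Nat.dist j j') ^ 2 *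
      (((2 : ℝ) ^ j) ^ (3 / 4 : ℝ) * ((2 : ℝ) ^ j') ^ (3 / 4 : ℝ)) := by
  rw [Nat.dist_eq_sub_of_le hj, Real.sqrt_eq_rpow, shellDecay]
  simp only [← Real.rpow_natCast, ← Real.rpow_mul zero_le_two, ← Real.rpow_add zero_lt_two,
    Nat.cast_sub hj]
  congr 1
  push_cast
  ring

lemma sum_integral_sq_norm_synthesis_shellPart_mul_le (hτ : 0 < τ)
    (hK : ∀ k ∈ K, τ * (k : ℝ) ^ 2 ≤ 1) (hV : ∀ k ∈ K, MemLp (V k) 2 haarAddCircle)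
    (S : Finset ℤ) {j j' : ℕ} (hj : j ≤ j') :
    ∑ n ∈ S, ∫ x, ‖synthesis K (shellPart τ V j) n x *
      synthesis K (shellPart τ V j') n x‖ ^ 2 ∂haarAddCircle ≤
      14 * τ * (2 ^ j * √(2 ^ j')) * (shellMass τ K V j * shellMass τ K V j') :=
  sum_integral_sq_norm_synthesis_mul_le K S (fun k hk => memLp_shellPart (hV k hk) τ j)
    (fun k hk => memLp_shellPart (hV k hk) τ j') (fun _ _ => measurableSet_closedBall)
    (fun _ _ => measurableSet_closedBall)
    (fun k _ => support_shellPart_subset_closedBall hτ V j k)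
    (fun k _ => support_shellPart_subset_closedBall hτ V j' k)
    (sum_measureReal_inter_closedBall_dyadic_le hτ hK hj)

lemma sqrt_sum_integral_sq_norm_synthesis_shellPart_mul_le (hτ : 0 < τ)
    (hK : ∀ k ∈ K, τ * (k : ℝ) ^ 2 ≤ 1) (hV : ∀ k ∈ K, MemLp (V k) 2 haarAddCircle)
    (S : Finset ℤ) (j j' : ℕ) :
    √(∑ n ∈ S, ∫ x, ‖synthesis K (shellPart τ V j) n x *
      synthesis K (shellPart τ V j') n x‖ ^ 2 ∂haarAddCircle) ≤
      √(14 * τ) * (shellDecay ^ Nat.dist j j' *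
        √(((2 : ℝ) ^ j) ^ (3 / 4 : ℝ) * shellMass τ K V j) *
        √(((2 : ℝ) ^ j') ^ (3 / 4 : ℝ) * shellMass τ K V j')) := by
  wlog hj : j ≤ j' generalizing j j'
  · simpa only [mul_comm (synthesis K (shellPart τ V j) _ _), Nat.dist_comm j, mul_right_comm]
      using this j' j (le_of_not_ge hj)
  have hmass := shellMass_nonneg τ K V
  have hdecay := shellDecay_nonneg
  refine Real.sqrt_le_iff.2 ⟨by positivity, ?_⟩
  refine (sum_integral_sq_norm_synthesis_shellPart_mul_le hτ hK hV S hj).trans_eq ?_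
  simp only [mul_pow]
  rw [Real.sq_sqrt (by positivity), Real.sq_sqrt (mul_nonneg (by positivity) (hmass j)),
    Real.sq_sqrt (mul_nonneg (by positivity) (hmass j')), two_pow_mul_sqrt_two_pow hj]
  ring

/-- The constant of the discrete `L⁴` Strichartz estimate; `2 / (1 - shellDecay)` bounds the row
sums of the kernel `shellDecay ^ |j - j'|`. -/
def strichartzConst : ℝ := 14 * (2 / (1 - shellDecay)) ^ 2

lemma strichartzConst_pos : 0 < strichartzConst := by
  have hgap : 0 < 1 - shellDecay := sub_pos.2 shellDecay_lt_one
  unfold strichartzConst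
  positivity

lemma norm_synthesis_pow_four_eq {J : ℕ} (hJ : ∀ k θ, modulation τ k θ < 2 ^ J)
    (hV : ∀ k ∈ K, MemLp (V k) 2 haarAddCircle) (n : ℤ) (x : Torus) :
    ‖synthesis K V n x‖ ^ 4 = ‖∑ p ∈ Finset.range J ×ˢ Finset.range J,
      synthesis K (shellPart τ V p.1) n x * synthesis K (shellPart τ V p.2) n x‖ ^ 2 := by
  rw [Finset.sum_product' _ _ fun j j' => synthesis K (shellPart τ V j) n x *
      synthesis K (shellPart τ V j') n x, ← Finset.sum_mul_sum,
    ← synthesis_eq_sum_synthesis_shellPart hJ hV, norm_mul]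
  ring

lemma sum_sum_shellDecay_pow_dist_mul_le {J : ℕ} (hJ : ∀ k θ, modulation τ k θ < 2 ^ J)
    (hV : ∀ k ∈ K, MemLp (V k) 2 haarAddCircle) :
    ∑ j ∈ Finset.range J, ∑ j' ∈ Finset.range J, shellDecay ^ Nat.dist j j' *
      √(((2 : ℝ) ^ j) ^ (3 / 4 : ℝ) * shellMass τ K V j) *
      √(((2 : ℝ) ^ j') ^ (3 / 4 : ℝ) * shellMass τ K V j') ≤
      2 / (1 - shellDecay) * modulationEnergy τ (3 / 4) K V := by
  have hrow : 0 ≤ 2 / (1 - shellDecay) :=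
    div_nonneg zero_le_two (sub_nonneg.2 shellDecay_lt_one.le)
  refine (sum_sum_kernel_mul_le_of_symm (fun j j' => pow_nonneg shellDecay_nonneg (Nat.dist j j'))
    (fun j j' => by rw [Nat.dist_comm])
    (fun j _ => sum_range_pow_dist_le shellDecay_nonneg shellDecay_lt_one J j) _).trans ?_
  gcongr
  refine le_of_eq_of_le (Finset.sum_congr rfl fun j _ => Real.sq_sqrt ?_)
    (sum_range_rpow_mul_shellMass_le hJ (by norm_num) hV)
  exact mul_nonneg (by positivity) (shellMass_nonneg τ K V j)

lemma sqrt_sum_integral_norm_synthesis_pow_four_le (hτ : 0 < τ)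
    (hK : ∀ k ∈ K, τ * (k : ℝ) ^ 2 ≤ 1) (hV : ∀ k ∈ K, MemLp (V k) 2 haarAddCircle)
    (S : Finset ℤ) :
    √(∑ n ∈ S, ∫ x, ‖synthesis K V n x‖ ^ 4 ∂haarAddCircle) ≤
      √(14 * τ) * (2 / (1 - shellDecay) * modulationEnergy τ (3 / 4) K V) := by
  obtain ⟨J, hJ⟩ := exists_modulation_lt_two_pow hτ
  simp only [norm_synthesis_pow_four_eq hJ hV]
  calc _ ≤ ∑ p ∈ Finset.range J ×ˢ Finset.range J, √(14 * τ) * (shellDecay ^ Nat.dist p.1 p.2 *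
        √(((2 : ℝ) ^ p.1) ^ (3 / 4 : ℝ) * shellMass τ K V p.1) *
        √(((2 : ℝ) ^ p.2) ^ (3 / 4 : ℝ) * shellMass τ K V p.2)) :=
        (sqrt_sum_integral_sq_norm_sum_le _ S fun p n => memLp_of_continuous
          ((continuous_synthesis _ _ _).mul (continuous_synthesis _ _ _)) 2).trans
        (Finset.sum_le_sum fun p _ =>
          sqrt_sum_integral_sq_norm_synthesis_shellPart_mul_le hτ hK hV S p.1 p.2)
    _ ≤ _ := by
        rw [← Finset.mul_sum, Finset.sum_product]
        gcongr
        exact sum_sum_shellDecay_pow_dist_mul_le hJ hV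

lemma sum_integral_norm_synthesis_pow_four_le (hτ : 0 < τ)
    (hK : ∀ k ∈ K, τ * (k : ℝ) ^ 2 ≤ 1) (hV : ∀ k ∈ K, MemLp (V k) 2 haarAddCircle)
    (S : Finset ℤ) :
    ∑ n ∈ S, ∫ x, ‖synthesis K V n x‖ ^ 4 ∂haarAddCircle ≤
      strichartzConst * τ * modulationEnergy τ (3 / 4) K V ^ 2 := by
  have hsq := (Real.sqrt_le_iff.1 (sqrt_sum_integral_norm_synthesis_pow_four_le hτ hK hV S)).2
  rw [mul_pow, Real.sq_sqrt (by positivity), mul_pow] at hsq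
  exact hsq.trans_eq (by rw [strichartzConst]; ring)

end Strichartz

section Holder

variable {α ι : Type*} {m : MeasurableSpace α} {μ : Measure α} {p q : ℝ}

lemma norm_integral_mul_le_rpow_mul_rpow (hpq : p.HolderConjugate q) {f g : α → ℂ}
    (hf : MemLp f (ENNReal.ofReal p) μ) (hg : MemLp g (ENNReal.ofReal q) μ) :
    ‖∫ x, f x * g x ∂μ‖ ≤ (∫ x, ‖f x‖ ^ p ∂μ) ^ (1 / p) * (∫ x, ‖g x‖ ^ q ∂μ) ^ (1 / q) := by
  refine (norm_integral_le_integral_norm _).trans ?_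
  simp only [norm_mul]
  exact integral_mul_le_Lp_mul_Lq_of_nonneg hpq (ae_of_all _ fun x => norm_nonneg _)
    (ae_of_all _ fun x => norm_nonneg _) hf.norm hg.norm

lemma norm_sum_integral_mul_le_rpow_mul_rpow (hpq : p.HolderConjugate q) (S : Finset ι)
    {f g : ι → α → ℂ} (hf : ∀ i ∈ S, MemLp (f i) (ENNReal.ofReal p) μ)
    (hg : ∀ i ∈ S, MemLp (g i) (ENNReal.ofReal q) μ) :
    ‖∑ i ∈ S, ∫ x, f i x * g i x ∂μ‖ ≤
      (∑ i ∈ S, ∫ x, ‖f i x‖ ^ p ∂μ) ^ (1 / p) * (∑ i ∈ S, ∫ x, ‖g i x‖ ^ q ∂μ) ^ (1 / q) := by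
  have hintegral (h : α → ℂ) (r : ℝ) : 0 ≤ ∫ x, ‖h x‖ ^ r ∂μ :=
    integral_nonneg fun _ => by positivity
  have hrpow (h : α → ℂ) {r : ℝ} (hr : r ≠ 0) :
      ((∫ x, ‖h x‖ ^ r ∂μ) ^ (1 / r)) ^ r = ∫ x, ‖h x‖ ^ r ∂μ := by
    rw [one_div, Real.rpow_inv_rpow (hintegral h r) hr]
  calc ‖∑ i ∈ S, ∫ x, f i x * g i x ∂μ‖
      ≤ ∑ i ∈ S, (∫ x, ‖f i x‖ ^ p ∂μ) ^ (1 / p) * (∫ x, ‖g i x‖ ^ q ∂μ) ^ (1 / q) :=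
        (norm_sum_le _ _).trans (Finset.sum_le_sum fun i hi =>
          norm_integral_mul_le_rpow_mul_rpow hpq (hf i hi) (hg i hi))
    _ ≤ _ := by
        simpa only [hrpow _ hpq.ne_zero, hrpow _ hpq.symm.ne_zero] using
          Real.inner_le_Lp_mul_Lq_of_nonneg S hpq
            (fun i _ => Real.rpow_nonneg (hintegral (f i) p) (1 / p))
            (fun i _ => Real.rpow_nonneg (hintegral (g i) q) (1 / q))

lemma toReal_eLpNorm_ofReal_rpow (hp : 0 < p) {f : α → ℂ} (hf : MemLp f (ENNReal.ofReal p) μ) :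
    (eLpNorm f (ENNReal.ofReal p) μ).toReal ^ p = ∫ x, ‖f x‖ ^ p ∂μ := by
  have hnonneg : 0 ≤ ∫ x, ‖f x‖ ^ p ∂μ := integral_nonneg fun _ => by positivity
  rw [hf.eLpNorm_eq_integral_rpow_norm (by simpa using hp) ENNReal.ofReal_ne_top,
    ENNReal.toReal_ofReal hp.le, ENNReal.toReal_ofReal (by positivity),
    Real.rpow_inv_rpow hnonneg hp.ne']

end Holder

section Duality

open scoped ComplexConjugate

variable {T : ℝ} [hT : Fact (0 < T)]

/-- The space-time Fourier transform, as a function of the time frequency `θ`, of a sequence `u`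
supported on `S`. It is adjoint to `synthesis`. -/
def analysis (S : Finset ℤ) (u : ℤ → AddCircle T → ℂ) (k : ℤ) (θ : AddCircle T) : ℂ :=
  ∑ m ∈ S, fourierCoeff (u m) k * fourier m θ

lemma continuous_analysis (S : Finset ℤ) (u : ℤ → AddCircle T → ℂ) (k : ℤ) :
    Continuous (analysis S u k) := by
  unfold analysis
  fun_prop

lemma integral_mul_conj_sum_mul_fourier (K : Finset ℤ) (c : ℤ → ℂ) {f : AddCircle T → ℂ}
    (hf : Integrable f haarAddCircle) :
    ∫ x, f x * conj (∑ k ∈ K, c k * fourier k x) ∂haarAddCircle =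
      ∑ k ∈ K, fourierCoeff f k * conj (c k) := by
  have hexpand (x : AddCircle T) : f x * conj (∑ k ∈ K, c k * fourier k x) =
      ∑ k ∈ K, (fourier (-k) x • f x) * conj (c k) := by
    simp only [map_sum, map_mul, Finset.mul_sum, smul_eq_mul, fourier_neg]
    exact Finset.sum_congr rfl fun k _ => by ring
  simp only [hexpand]
  rw [integral_finsetSum _ fun k _ => (hf.fourier_smul (-k)).mul_const _]
  simp only [integral_mul_const, fourierCoeff]

lemma sum_integral_analysis_mul_conj (K S : Finset ℤ) {u V : ℤ → AddCircle T → ℂ}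
    (hu : ∀ m ∈ S, Integrable (u m) haarAddCircle)
    (hV : ∀ k ∈ K, Integrable (V k) haarAddCircle) :
    ∑ k ∈ K, ∫ θ, analysis S u k θ * conj (V k θ) ∂haarAddCircle =
      ∑ m ∈ S, ∫ x, u m x * conj (synthesis K V m x) ∂haarAddCircle := by
  have hleft (k : ℤ) (hk : k ∈ K) : ∫ θ, analysis S u k θ * conj (V k θ) ∂haarAddCircle =
      ∑ m ∈ S, fourierCoeff (u m) k * conj (fourierCoeff (V k) m) := by
    have hconj := congrArg conj (integral_mul_conj_sum_mul_fourier S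
      (fun m => fourierCoeff (u m) k) (hV k hk))
    rw [← integral_conj] at hconj
    simpa only [analysis, map_mul, map_sum, Complex.conj_conj, mul_comm] using hconj
  rw [Finset.sum_congr rfl hleft, Finset.sum_comm]
  exact Finset.sum_congr rfl fun m hm =>
    (integral_mul_conj_sum_mul_fourier K (fun k => fourierCoeff (V k) m) (hu m hm)).symm

end Duality

section DualEstimate

open scoped ComplexConjugate

variable {τ : ℝ} {K S : Finset ℤ} {u : ℤ → Torus → ℂ}

/-- The multiplication of a family of functions of the time frequency by a power of the weight
`⟨d_τ(σ - k²)⟩`; it maps a family to the test family saturating the duality pairing. -/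
def modulationMul (τ a : ℝ) (V : ℤ → Torus → ℂ) (k : ℤ) (θ : Torus) : ℂ :=
  ((modulation τ k θ ^ a : ℝ) : ℂ) * V k θ

lemma continuous_modulationMul (τ a : ℝ) {V : ℤ → Torus → ℂ} {k : ℤ} (hV : Continuous (V k)) :
    Continuous (modulationMul τ a V k) :=
  (continuous_ofReal.comp (continuous_modulation_rpow τ a k)).mul hV

lemma modulationEnergy_modulationMul_neg (τ a : ℝ) (K : Finset ℤ) (V : ℤ → Torus → ℂ) :
    modulationEnergy τ a K (modulationMul τ (-a) V) = modulationEnergy τ (-a) K V := by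
  refine Finset.sum_congr rfl fun k _ => integral_congr_ae (ae_of_all _ fun θ => ?_)
  have hpos := modulation_pos τ k θ
  simp only [modulationMul]
  rw [norm_mul, Complex.norm_real, Real.norm_of_nonneg (by positivity), mul_pow, ← mul_assoc, sq,
    ← mul_assoc, ← Real.rpow_add hpos, add_neg_cancel, Real.rpow_zero, one_mul]

lemma ofReal_modulationEnergy (τ a : ℝ) (K : Finset ℤ) (V : ℤ → Torus → ℂ) :
    (modulationEnergy τ a K V : ℂ) =
      ∑ k ∈ K, ∫ θ, V k θ * conj (modulationMul τ a V k θ) ∂haarAddCircle := by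
  rw [modulationEnergy, Complex.ofReal_sum]
  refine Finset.sum_congr rfl fun k _ => ?_
  rw [← integral_complex_ofReal]
  refine integral_congr_ae (ae_of_all _ fun θ => ?_)
  simp only [modulationMul, map_mul, Complex.conj_ofReal]
  push_cast
  rw [← Complex.mul_conj']
  ring

lemma modulationEnergy_analysis_le
    (hu : ∀ m ∈ S, MemLp (u m) (ENNReal.ofReal (4 / 3)) haarAddCircle) (τ a : ℝ) :
    modulationEnergy τ a K (analysis S u) ≤
      (∑ m ∈ S, ∫ x, ‖u m x‖ ^ (4 / 3 : ℝ) ∂haarAddCircle) ^ (3 / 4 : ℝ) *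
      (∑ m ∈ S, ∫ x, ‖synthesis K (modulationMul τ a (analysis S u)) m x‖ ^ 4
        ∂haarAddCircle) ^ (1 / 4 : ℝ) := by
  have hone : 1 ≤ ENNReal.ofReal (4 / 3) := ENNReal.one_le_ofReal.2 (by norm_num)
  have hV (k : ℤ) : Continuous (modulationMul τ a (analysis S u) k) :=
    continuous_modulationMul τ a (continuous_analysis S u k)
  have hpairing : (modulationEnergy τ a K (analysis S u) : ℂ) = ∑ m ∈ S, ∫ x, u m x *
      conj (synthesis K (modulationMul τ a (analysis S u)) m x) ∂haarAddCircle := by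
    rw [ofReal_modulationEnergy]
    exact sum_integral_analysis_mul_conj K S (fun m hm => (hu m hm).integrable hone)
      fun k _ => (memLp_of_continuous (hV k) 1).integrable le_rfl
  have hholder := norm_sum_integral_mul_le_rpow_mul_rpow (p := 4 / 3) (q := 4)
    (Real.holderConjugate_iff.2 (by norm_num)) S hu fun m _ => memLp_of_continuous
      (Complex.continuous_conj.comp
        (continuous_synthesis K (modulationMul τ a (analysis S u)) m)) _
  rw [← Real.norm_of_nonneg (modulationEnergy_nonneg τ a K _), ← Complex.norm_real, hpairing]
  refine hholder.trans_eq ?_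
  simp only [Function.comp_apply, RCLike.norm_conj]
  norm_num

lemma sq_le_of_le_rpow_mul_rpow {Q U A : ℝ} (hQ : 0 ≤ Q) (hU : 0 ≤ U) (hA : 0 ≤ A)
    (h : Q ≤ U ^ (3 / 4 : ℝ) * (A * Q ^ 2) ^ (1 / 4 : ℝ)) : Q ^ 2 ≤ A * U ^ 3 := by
  rcases hQ.eq_or_lt with rfl | hQpos
  · rw [zero_pow two_ne_zero]
    positivity
  have hfour : Q ^ 4 ≤ U ^ 3 * (A * Q ^ 2) :=
    calc Q ^ 4 ≤ (U ^ (3 / 4 : ℝ) * (A * Q ^ 2) ^ (1 / 4 : ℝ)) ^ 4 := by gcongr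
      _ = U ^ 3 * (A * Q ^ 2) := by
        rw [mul_pow, ← Real.rpow_mul_natCast hU, ← Real.rpow_mul_natCast (by positivity)]
        norm_num
  refine le_of_mul_le_mul_right ?_ (pow_pos hQpos 2)
  linarith

lemma sq_modulationEnergy_analysis_le (hτ : 0 < τ) (hK : ∀ k ∈ K, τ * (k : ℝ) ^ 2 ≤ 1)
    (hu : ∀ m ∈ S, MemLp (u m) (ENNReal.ofReal (4 / 3)) haarAddCircle) :
    modulationEnergy τ (-(3 / 4)) K (analysis S u) ^ 2 ≤
      strichartzConst * τ * (∑ m ∈ S, ∫ x, ‖u m x‖ ^ (4 / 3 : ℝ) ∂haarAddCircle) ^ 3 := by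
  have hC := strichartzConst_pos
  refine sq_le_of_le_rpow_mul_rpow (modulationEnergy_nonneg _ _ _ _)
    (Finset.sum_nonneg fun m _ => integral_nonneg fun x => by positivity) (by positivity)
    ((modulationEnergy_analysis_le hu τ (-(3 / 4))).trans ?_)
  gcongr
  rw [← modulationEnergy_modulationMul_neg]
  exact sum_integral_norm_synthesis_pow_four_le hτ hK (fun k _ => memLp_of_continuous
    (continuous_modulationMul _ _ (continuous_analysis S u k)) 2) S

end DualEstimate

section Norms

variable {τ : ℝ}

/-- The finite set of frequencies kept by the cutoff `Π_τ`. -/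
def cutoffModes (τ : ℝ) : Finset ℤ :=
  Finset.Icc ⌈-τ ^ (-(1 : ℝ) / 2)⌉ ⌊τ ^ (-(1 : ℝ) / 2)⌋

lemma mem_cutoffModes {k : ℤ} : k ∈ cutoffModes τ ↔ |(k : ℝ)| ≤ τ ^ (-(1 : ℝ) / 2) := by
  rw [cutoffModes, Finset.mem_Icc, Int.ceil_le, Int.le_floor, abs_le]

lemma mul_sq_le_one_of_mem_cutoffModes (hτ : 0 < τ) {k : ℤ} (hk : k ∈ cutoffModes τ) :
    τ * (k : ℝ) ^ 2 ≤ 1 := by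
  have hsq : (τ ^ (-(1 : ℝ) / 2)) ^ 2 = τ⁻¹ := by
    rw [← Real.rpow_mul_natCast hτ.le, ← Real.rpow_neg_one]
    norm_num
  calc τ * (k : ℝ) ^ 2 ≤ τ * (τ ^ (-(1 : ℝ) / 2)) ^ 2 := by
        rw [← sq_abs]
        gcongr
        exact mem_cutoffModes.1 hk
    _ = 1 := by rw [hsq, mul_inv_cancel₀ hτ.ne']

lemma fourierCoeff_projC (τ : ℝ) (f : Torus → ℂ) (k : ℤ) :
    fourierCoeff (projC τ f) k = if k ∈ cutoffModes τ then fourierCoeff f k else 0 := by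
  rw [← fourierCoeff_sum_mul_fourier (T := 2 * Real.pi)]
  congr 1
  ext x
  simp only [projC, ← mem_cutoffModes]
  rw [tsum_eq_sum (s := cutoffModes τ) fun l hl => if_neg hl]
  exact Finset.sum_congr rfl fun l hl => if_pos hl

lemma tsum_fourierCoeff_projC_mul_exp {S : Finset ℤ} {u : ℤ → Torus → ℂ} (hS : ∀ m ∉ S, u m = 0)
    (τ σ : ℝ) (k : ℤ) :
    ∑' m : ℤ, fourierCoeff (projC τ (u m)) k * Complex.exp (Complex.I * m * τ * σ) =
      if k ∈ cutoffModes τ then analysis S u k ((τ * σ : ℝ) : Torus) else 0 := by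
  simp only [fourierCoeff_projC, analysis, fourier_coe_torus]
  split_ifs
  · rw [tsum_eq_sum (s := S) fun m hm => by simp [hS m hm, fourierCoeff]]
    push_cast
    simp only [mul_assoc]
  · simp

lemma jbr_norm_dtau_sub_sq (hτ : 0 < τ) (σ : ℝ) (k : ℤ) :
    jbr ‖dtau τ (σ - (k : ℝ) ^ 2)‖ = modulation τ k ((τ * σ : ℝ) : Torus) := by
  rw [dtau, modulation, parabolaPoint, ← AddCircle.coe_sub, fourier_coe_torus, norm_div,
    Complex.norm_real, Real.norm_of_nonneg hτ.le]
  congr 4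
  push_cast
  ring_nf

lemma integral_comp_mul_coe_torus (hτ : 0 < τ) (Φ : Torus → ℝ) :
    ∫ σ in Set.Ioc (-(Real.pi / τ)) (Real.pi / τ), Φ ((τ * σ : ℝ) : Torus) =
      2 * Real.pi / τ * ∫ θ, Φ θ ∂haarAddCircle := by
  have hle : -(Real.pi / τ) ≤ Real.pi / τ := neg_le_self (by positivity)
  rw [← intervalIntegral.integral_of_le hle,
    intervalIntegral.integral_comp_mul_left (fun y : ℝ => Φ (y : Torus)) hτ.ne',
    show τ * -(Real.pi / τ) = -Real.pi by field_simp,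
    show τ * (Real.pi / τ) = -Real.pi + 2 * Real.pi by field_simp; ring,
    AddCircle.intervalIntegral_preimage, integral_haarAddCircle, smul_eq_mul, smul_eq_mul]
  field_simp

lemma XdNorm_projC (hτ : 0 < τ) (s b : ℝ) {S : Finset ℤ} {u : ℤ → Torus → ℂ}
    (hS : ∀ m ∉ S, u m = 0) :
    XdNorm τ s b (fun n => projC τ (u n)) = √(2 * Real.pi * τ * ∑ k ∈ cutoffModes τ,
      jbr k ^ (2 * s) * ∫ θ, modulation τ k θ ^ (2 * b) * ‖analysis S u k θ‖ ^ 2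
        ∂haarAddCircle) := by
  set Φ : Torus → ℝ := fun θ => ∑ k ∈ cutoffModes τ,
    τ ^ 2 * jbr k ^ (2 * s) * (modulation τ k θ ^ (2 * b) * ‖analysis S u k θ‖ ^ 2)
  have hintegrand (σ : ℝ) : ∑' k : ℤ, jbr k ^ (2 * s) *
      jbr ‖dtau τ (σ - (k : ℝ) ^ 2)‖ ^ (2 * b) * ‖(τ : ℂ) * ∑' m : ℤ,
        fourierCoeff (projC τ (u m)) k * Complex.exp (Complex.I * m * τ * σ)‖ ^ 2 =
      Φ ((τ * σ : ℝ) : Torus) := by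
    simp only [tsum_fourierCoeff_projC_mul_exp hS, jbr_norm_dtau_sub_sq hτ]
    rw [tsum_eq_sum (s := cutoffModes τ) fun k hk => by simp [hk]]
    refine Finset.sum_congr rfl fun k hk => ?_
    rw [if_pos hk, norm_mul, Complex.norm_real, Real.norm_of_nonneg hτ.le]
    ring
  have hintegral : ∫ θ, Φ θ ∂haarAddCircle = τ ^ 2 * ∑ k ∈ cutoffModes τ, jbr k ^ (2 * s) *
      ∫ θ, modulation τ k θ ^ (2 * b) * ‖analysis S u k θ‖ ^ 2 ∂haarAddCircle := by
    rw [integral_finsetSum _ fun k _ => (integrable_modulation_rpow_mul τ (2 * b) k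
      (memLp_of_continuous (continuous_analysis S u k) 2)).const_mul _]
    simp only [integral_const_mul, Finset.mul_sum, mul_assoc]
  simp only [XdNorm, hintegrand]
  rw [integral_comp_mul_coe_torus hτ, hintegral]
  congr 1
  field_simp

lemma lpLqNorm_eq_sum {p : ℝ} (hp : 0 < p) {S : Finset ℤ} {u : ℤ → Torus → ℂ}
    (hu : ∀ n, MemLp (u n) (ENNReal.ofReal p) haarAddCircle) (hS : ∀ n ∉ S, u n = 0) (τ : ℝ) :
    lpLqNorm τ p p u = (τ * ∑ n ∈ S, ∫ x, ‖u n x‖ ^ p ∂haarAddCircle) ^ (1 / p) := by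
  rw [lpLqNorm, tsum_eq_sum (s := S) fun n hn => by simp [hS n hn, Real.zero_rpow hp.ne']]
  simp only [toReal_eLpNorm_ofReal_rpow hp (hu _)]

end Norms

lemma XdNorm_projC_pow_four_le {τ : ℝ} (hτ : 0 < τ) {u : ℤ → Torus → ℂ}
    (hu : ∀ n, MemLp (u n) (ENNReal.ofReal (4 / 3)) haarAddCircle)
    (hfin : {n : ℤ | u n ≠ 0}.Finite) :
    XdNorm τ 0 (-(3 / 8)) (fun n => projC τ (u n)) ^ 4 ≤
      (2 * Real.pi) ^ 2 * strichartzConst * lpLqNorm τ (4 / 3) (4 / 3) u ^ 4 := by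
  have hS (n : ℤ) (hn : n ∉ hfin.toFinset) : u n = 0 := by simpa using hn
  set Q := modulationEnergy τ (-(3 / 4)) (cutoffModes τ) (analysis hfin.toFinset u) with hQ
  set U := ∑ n ∈ hfin.toFinset, ∫ x, ‖u n x‖ ^ (4 / 3 : ℝ) ∂haarAddCircle
  have hQ0 : 0 ≤ Q := modulationEnergy_nonneg _ _ _ _
  have hU0 : 0 ≤ U := Finset.sum_nonneg fun n _ => integral_nonneg fun x => by positivity
  have hX : XdNorm τ 0 (-(3 / 8)) (fun n => projC τ (u n)) ^ 4 = (2 * Real.pi * τ * Q) ^ 2 := by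
    have hsq : XdNorm τ 0 (-(3 / 8)) (fun n => projC τ (u n)) = √(2 * Real.pi * τ * Q) := by
      rw [XdNorm_projC hτ 0 _ hS, hQ, modulationEnergy]
      norm_num
    rw [hsq, pow_mul _ 2 2, Real.sq_sqrt (by positivity)]
  have hL : lpLqNorm τ (4 / 3) (4 / 3) u ^ 4 = (τ * U) ^ 3 := by
    rw [lpLqNorm_eq_sum (by norm_num) hu hS, ← Real.rpow_mul_natCast (by positivity),
      show 1 / (4 / 3) * ((4 : ℕ) : ℝ) = (3 : ℕ) by norm_num, Real.rpow_natCast]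
  rw [hX, hL]
  calc (2 * Real.pi * τ * Q) ^ 2 = (2 * Real.pi) ^ 2 * τ ^ 2 * Q ^ 2 := by ring
    _ ≤ (2 * Real.pi) ^ 2 * τ ^ 2 * (strichartzConst * τ * U ^ 3) := by
        gcongr
        exact sq_modulationEnergy_analysis_le hτ
          (fun k hk => mul_sq_le_one_of_mem_cutoffModes hτ hk) fun n _ => hu n
    _ = (2 * Real.pi) ^ 2 * strichartzConst * (τ * U) ^ 3 := by ring

theorem discrete_dual_l43_estimate_general :
    ∃ C > (0 : ℝ), ∀ τ > (0 : ℝ), ∀ u : ℤ → Torus → ℂ,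
      (∀ n, MemLp (u n) (ENNReal.ofReal (4 / 3)) haarAddCircle) → {n : ℤ | u n ≠ 0}.Finite →
      XdNorm τ 0 (-(3 / 8)) (fun n => projC τ (u n)) ≤ C * lpLqNorm τ (4 / 3) (4 / 3) u := by
  have hC : 0 < (2 * Real.pi) ^ 2 * strichartzConst :=
    mul_pos (pow_pos Real.two_pi_pos 2) strichartzConst_pos
  refine ⟨((2 * Real.pi) ^ 2 * strichartzConst) ^ (1 / 4 : ℝ), by positivity,
    fun τ hτ u hu hfin => ?_⟩
  have hL : 0 ≤ lpLqNorm τ (4 / 3) (4 / 3) u :=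
    Real.rpow_nonneg (mul_nonneg hτ.le (tsum_nonneg fun n => by positivity)) _
  refine le_of_pow_le_pow_left₀ four_ne_zero (by positivity) ?_
  rw [mul_pow, ← Real.rpow_mul_natCast hC.le]
  norm_num only [Real.rpow_one]
  exact XdNorm_projC_pow_four_le hτ hu hfin

/-- The dual estimate `‖(Π_τ u_n)‖_{X^{0,-3/8}_τ} ≲ ‖(u_n)‖_{ℓ^{4/3}_τ L^{4/3}}`. -/
theorem discrete_dual_l43_estimate :
    ∃ C > (0 : ℝ), ∀ τ ∈ Set.Ioc (0 : ℝ) 1, ∀ u : ℤ → Torus → ℂ,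
      (∀ n, MemLp (u n) (ENNReal.ofReal (4 / 3)) haarAddCircle) → {n : ℤ | u n ≠ 0}.Finite →
      XdNorm τ 0 (-(3 / 8)) (fun n => projC τ (u n)) ≤ C * lpLqNorm τ (4 / 3) (4 / 3) u := by
  obtain ⟨C, hC, hle⟩ := discrete_dual_l43_estimate_general
  exact ⟨C, hC, fun τ hτ => hle τ hτ.1⟩
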